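/- Let G=(V,E,I,T) be an inner Eulerian grapht with |E|≤ℵ₀. Then after the deletion of at most two edges, every t∈T for which δ_G(t) was the unique Erdős-Menger t(T−t)-cut remains linked. -/

import Mathlib

/-! Common definitions: graphts (multigraphs with terminals), walks, paths, cycles,
edge cuts, inner Eulerian graphts, path systems, linkages, Erdős–Menger cuts,
restriction (edge deletion) and contraction. -/

universe u v

/-- A *grapht*: a multigraph (no loops, parallel edges allowed) given by an incidence
function `I : E → Sym2 V`, together with a set `T` of at least two terminal vertices. -/
structure Grapht (V : Type u) (E : Type v) where
  I : E → Sym2 V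
  loopless : ∀ e : E, ¬ (I e).IsDiag
  T : Set V
  T_nontrivial : T.Nontrivial

namespace Grapht

variable {V : Type u} {E : Type v}

/-- `G.IsWalk vs es` holds when `vs` is the vertex sequence and `es` the edge sequence
of a walk in `G`. -/
inductive IsWalk (G : Grapht V E) : List V → List E → Prop
  | nil (v : V) : IsWalk G [v] []
  | cons {u w : V} {vs : List V} {e : E} {es : List E} :
      G.I e = s(u, w) → IsWalk G (w :: vs) es → IsWalk G (u :: w :: vs) (e :: es)

/-- A finite path in the grapht `G` (no repeated vertices), with endpoints `first`, `last`. -/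
structure Path (G : Grapht V E) where
  first : V
  last : V
  verts : List V
  edges : List E
  isWalk : G.IsWalk verts edges
  nodup : verts.Nodup
  head_eq : verts.head? = some first
  getLast_eq : verts.getLast? = some last

/-- A finite cycle in the grapht `G`. -/
structure Cycle (G : Grapht V E) where
  verts : List V
  edges : List E
  isWalk : G.IsWalk verts edges
  closed : verts.head? = verts.getLast?
  nontrivial : edges ≠ []
  edges_nodup : edges.Nodup
  tail_nodup : verts.tail.Nodup

variable {G : Grapht V E}

/-- The internal (inner) vertices of a path. -/
def Path.inner (P : G.Path) : List V := (P.verts.drop 1).dropLast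

/-- The edge set of a path. -/
def Path.edgeSet (P : G.Path) : Set E := {e | e ∈ P.edges}

/-- The edge set of a cycle. -/
def Cycle.edgeSet (C : G.Cycle) : Set E := {e | e ∈ C.edges}

variable (G)

/-- `δ_G(X)`: the set of edges with exactly one endpoint in `X`. -/
def edgeCut (X : Set V) : Set E :=
  {e | ∃ u w, G.I e = s(u, w) ∧ u ∈ X ∧ w ∉ X}

/-- A grapht is *inner Eulerian* if there is no `X ⊆ V ∖ T` whose cut `δ(X)` is a
finite set of odd size. -/
def InnerEulerian : Prop :=
  ∀ X : Set V, Disjoint X G.T → ¬ ((G.edgeCut X).Finite ∧ Odd (G.edgeCut X).ncard)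

/-- An `AB`-path: a path with first vertex in `A`, last vertex in `B` and no internal
vertex in `A ∪ B`. -/
def IsABPath (A B : Set V) (P : G.Path) : Prop :=
  P.first ∈ A ∧ P.last ∈ B ∧ ∀ v ∈ P.inner, v ∉ A ∪ B

/-- A `T`-path: a path between two distinct terminal vertices without internal
terminal vertices. -/
def IsTPath (P : G.Path) : Prop :=
  P.first ∈ G.T ∧ P.last ∈ G.T ∧ P.first ≠ P.last ∧ ∀ v ∈ P.inner, v ∉ G.T

/-- A system of pairwise edge-disjoint paths. -/
def EdgeDisjoint (Ps : Set G.Path) : Prop :=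
  Ps.Pairwise fun P Q => ∀ e, e ∈ P.edges → e ∉ Q.edges

/-- A system of pairwise edge-disjoint `T`-paths. -/
def IsTPathSystem (Ps : Set G.Path) : Prop :=
  G.EdgeDisjoint Ps ∧ ∀ P ∈ Ps, G.IsTPath P

/-- The set of edges used by a path system. -/
def sysEdges (Ps : Set G.Path) : Set E := ⋃ P ∈ Ps, P.edgeSet

/-- `C` is *orthogonal* to the path system `Ps`: `C` consists of exactly one edge from
each path of `Ps`. -/
def Orthogonal (C : Set E) (Ps : Set G.Path) : Prop :=
  (∀ P ∈ Ps, ∃! e, e ∈ C ∧ e ∈ P.edges) ∧ ∀ e ∈ C, ∃ P ∈ Ps, e ∈ P.edges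

/-- `C` separates `A` and `B`: every `AB`-path meets `C` (i.e. `G − C` has no `AB`-path). -/
def Separates (C : Set E) (A B : Set V) : Prop :=
  ∀ P : G.Path, G.IsABPath A B P → ∃ e ∈ C, e ∈ P.edges

/-- An `AB`-cut. -/
def IsABCut (A B : Set V) (C : Set E) : Prop :=
  ∀ P : G.Path, G.IsABPath A B P → ∃ e ∈ C, e ∈ P.edges

/-- An Erdős–Menger `AB`-cut: an `AB`-cut orthogonal to some system of pairwise
edge-disjoint `AB`-paths. -/
def IsEMABCut (A B : Set V) (C : Set E) : Prop :=
  G.IsABCut A B C ∧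
    ∃ Ps : Set G.Path, G.EdgeDisjoint Ps ∧ (∀ P ∈ Ps, G.IsABPath A B P) ∧ G.Orthogonal C Ps

/-- The order `⊴` on (Erdős–Menger) `AB`-cuts: on every `AB`-path the first edge of `C`
comes no later than the first edge of `C'`. -/
def ABCutLE (A B : Set V) (C C' : Set E) : Prop :=
  ∀ P : G.Path, G.IsABPath A B P →
    ∀ i : Fin P.edges.length, P.edges.get i ∈ C' →
      ∃ j : Fin P.edges.length, (j : ℕ) ≤ (i : ℕ) ∧ P.edges.get j ∈ C

/-- `C` is the `⊴`-largest Erdős–Menger `AB`-cut. -/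
def IsLargestEMABCut (A B : Set V) (C : Set E) : Prop :=
  G.IsEMABCut A B C ∧ ∀ C', G.IsEMABCut A B C' → G.ABCutLE A B C' C

/-- A system `Ps` of pairwise edge-disjoint `T`-paths *links* the terminal `t`:
it covers `δ(t)`. -/
def Links (Ps : Set G.Path) (t : V) : Prop :=
  G.IsTPathSystem Ps ∧ ∀ e ∈ G.edgeCut {t}, ∃ P ∈ Ps, e ∈ P.edges

/-- The terminal `t` is linked. -/
def Linked (t : V) : Prop := ∃ Ps : Set G.Path, G.Links Ps t

/-- The linkability condition: every terminal is linked. -/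
def LinkabilityCondition : Prop := ∀ t ∈ G.T, G.Linked t

/-- A perfect linkage: a system of pairwise edge-disjoint `T`-paths linking every
terminal. -/
def IsPerfectLinkage (Ps : Set G.Path) : Prop :=
  G.IsTPathSystem Ps ∧ ∀ t ∈ G.T, ∀ e ∈ G.edgeCut {t}, ∃ P ∈ Ps, e ∈ P.edges

/-- In the two-terminal setting: a system of pairwise edge-disjoint `st`-paths
covering `δ(s)` (a linkage of `s`). -/
def IsStLinkage (s t : V) (Ps : Set G.Path) : Prop :=
  G.EdgeDisjoint Ps ∧ (∀ P ∈ Ps, G.IsABPath {s} {t} P) ∧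
    ∀ e ∈ G.edgeCut {s}, ∃ P ∈ Ps, e ∈ P.edges

/-- `s` is linked (two-terminal setting). -/
def StLinked (s t : V) : Prop := ∃ Ps : Set G.Path, G.IsStLinkage s t Ps

/-- `λ_G(A,B)`: the maximal number of pairwise edge-disjoint `AB`-paths. -/
noncomputable def lambda (A B : Set V) : ℕ :=
  sSup {n : ℕ | ∃ Ps : Set G.Path, G.EdgeDisjoint Ps ∧ (∀ P ∈ Ps, G.IsABPath A B P) ∧
    Ps.Finite ∧ Ps.ncard = n}

/-- The grapht obtained by deleting all edges outside `F`. -/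
def restrict (F : Set E) : Grapht V F where
  I e := G.I e.1
  loopless e := G.loopless e.1
  T := G.T
  T_nontrivial := G.T_nontrivial

/-- The map sending every vertex of a contracted set `X t` (`t ∈ T`) to `t`. -/
noncomputable def contractMap (X : V → Set V) : V → V := fun v =>
  letI := Classical.dec (∃ u ∈ G.T, v ∈ X u)
  if h : ∃ u ∈ G.T, v ∈ X u then h.choose else v

/-- The contraction `G/ℱ` of the family `ℱ = {X t : t ∈ T}`: each `X t` is contracted
to `t` and the arising loops are deleted. -/
noncomputable def contract (X : V → Set V) :
    Grapht V {e : E // ¬ ((G.I e).map (G.contractMap X)).IsDiag} where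
  I e := (G.I e.1).map (G.contractMap X)
  loopless e := e.2
  T := G.T
  T_nontrivial := G.T_nontrivial

end Grapht


namespace Grapht

open Classical

section Basics

variable {V : Type u} {E : Type v} {G : Grapht V E}

/-- The list of darts (edge, source, target) traversed by a walk. -/
def dartsL : List V → List E → List (E × V × V)
  | u :: w :: vs, e :: es => (e, u, w) :: dartsL (w :: vs) es
  | _, _ => []

theorem IsWalk.valid {vs : List V} {es : List E} (h : G.IsWalk vs es) :
    ∀ d ∈ dartsL vs es, G.I d.1 = s(d.2.1, d.2.2) := by
  induction h with
  | nil v => simp [dartsL]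
  | cons h1 _ ih =>
    intro d hd
    simp only [dartsL, List.mem_cons] at hd
    rcases hd with rfl | hd
    · exact h1
    · exact ih d hd

theorem IsWalk.map_fst {vs : List V} {es : List E} (h : G.IsWalk vs es) :
    (dartsL vs es).map (fun d => d.1) = es := by
  induction h with
  | nil v => simp [dartsL]
  | cons h1 _ ih => simp [dartsL, ih]

theorem IsWalk.map_src {vs : List V} {es : List E} (h : G.IsWalk vs es) :
    (dartsL vs es).map (fun d => d.2.1) = vs.dropLast := by
  induction h with
  | nil v => simp [dartsL]
  | cons h1 _ ih => simp [dartsL, ih]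

theorem IsWalk.map_dst {vs : List V} {es : List E} (h : G.IsWalk vs es) :
    (dartsL vs es).map (fun d => d.2.2) = vs.tail := by
  induction h with
  | nil v => simp [dartsL]
  | cons h1 _ ih => simpa [dartsL] using ih

/-- The darts of a path. -/
def Path.darts (P : G.Path) : List (E × V × V) := dartsL P.verts P.edges

theorem Path.valid (P : G.Path) {d : E × V × V} (hd : d ∈ P.darts) :
    G.I d.1 = s(d.2.1, d.2.2) := P.isWalk.valid d hd

theorem Path.mem_edges (P : G.Path) {e : E} :
    e ∈ P.edges ↔ ∃ d ∈ P.darts, d.1 = e := by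
  conv_lhs => rw [← P.isWalk.map_fst]
  simp only [List.mem_map]; rfl

theorem Path.darts_src_inj (P : G.Path) {d d' : E × V × V} (hd : d ∈ P.darts)
    (hd' : d' ∈ P.darts) (h : d.2.1 = d'.2.1) : d = d' := by
  have h1 : ((P.darts).map (fun d => d.2.1)).Nodup := by
    rw [Path.darts, P.isWalk.map_src]
    exact P.nodup.sublist (List.dropLast_sublist _)
  exact List.inj_on_of_nodup_map h1 hd hd' h

theorem Path.darts_dst_inj (P : G.Path) {d d' : E × V × V} (hd : d ∈ P.darts)
    (hd' : d' ∈ P.darts) (h : d.2.2 = d'.2.2) : d = d' := by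
  have h1 : ((P.darts).map (fun d => d.2.2)).Nodup := by
    rw [Path.darts, P.isWalk.map_dst]
    exact P.nodup.sublist (List.tail_sublist _)
  exact List.inj_on_of_nodup_map h1 hd hd' h

theorem IsWalk.mem_verts {vs : List V} {es : List E} (h : G.IsWalk vs es) :
    ∀ d ∈ dartsL vs es, d.2.1 ∈ vs ∧ d.2.2 ∈ vs := by
  induction h with
  | nil v => simp [dartsL]
  | cons h1 _ ih =>
    intro d hd
    simp only [dartsL, List.mem_cons] at hd
    rcases hd with rfl | hd
    · simp
    · have := ih d hd
      exact ⟨List.mem_cons_of_mem _ this.1, List.mem_cons_of_mem _ this.2⟩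

theorem IsWalk.edges_nodup {vs : List V} {es : List E} (h : G.IsWalk vs es) (hn : vs.Nodup) :
    es.Nodup := by
  induction h with
  | nil v => simp
  | @cons u w vs e es h1 h2 ih =>
    rw [List.nodup_cons] at hn
    refine List.nodup_cons.2 ⟨fun he => ?_, ih hn.2⟩
    rw [← h2.map_fst, List.mem_map] at he
    obtain ⟨d, hd, rfl⟩ := he
    have hv := h2.valid d hd
    have hm := h2.mem_verts d hd
    rw [h1, Sym2.eq_iff] at hv
    rcases hv with ⟨rfl, _⟩ | ⟨rfl, _⟩
    · exact hn.1 hm.1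
    · exact hn.1 hm.2

theorem Path.darts_edge_inj (P : G.Path) {d d' : E × V × V} (hd : d ∈ P.darts)
    (hd' : d' ∈ P.darts) (h : d.1 = d'.1) : d = d' := by
  have h1 : ((P.darts).map (fun d => d.1)).Nodup := by
    rw [Path.darts, P.isWalk.map_fst]
    exact P.isWalk.edges_nodup P.nodup
  exact List.inj_on_of_nodup_map h1 hd hd' h

theorem Path.darts_nodup (P : G.Path) : P.darts.Nodup := by
  have h1 : ((P.darts).map (fun d => d.1)).Nodup := by
    rw [Path.darts, P.isWalk.map_fst]
    exact P.isWalk.edges_nodup P.nodup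
  exact h1.of_map

/-- Contribution of a dart to the net out-degree at `x`. -/
noncomputable def ex (x : V) (d : E × V × V) : ℤ :=
  (if d.2.1 = x then 1 else 0) - (if d.2.2 = x then 1 else 0)

theorem IsWalk.sum_ex {vs : List V} {es : List E} (h : G.IsWalk vs es) (x : V) :
    ∀ a b, vs.head? = some a → vs.getLast? = some b →
    ((dartsL vs es).map (ex x)).sum = (if a = x then 1 else 0) - (if b = x then 1 else 0) := by
  induction h with
  | nil v => intro a b ha hb; simp at ha hb; simp [dartsL, ← ha, ← hb]
  | @cons u w vs e es h1 h2 ih =>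
    intro a b ha hb
    simp at ha
    rw [List.getLast?_cons_cons] at hb
    have := ih w b (by simp) hb
    simp only [dartsL, List.map_cons, List.sum_cons, this, ex, ha]
    ring

theorem Path.sum_ex (P : G.Path) (x : V) :
    (P.darts.map (ex x)).sum = (if P.first = x then 1 else 0) - (if P.last = x then 1 else 0) :=
  P.isWalk.sum_ex x _ _ P.head_eq P.getLast_eq

theorem Path.verts_head (P : G.Path) : ∃ l, P.verts = P.first :: l := by
  have := P.head_eq
  cases h : P.verts with
  | nil => simp [h] at this
  | cons a l => simp [h] at this; exact ⟨l, by rw [this]⟩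

theorem Path.verts_last (P : G.Path) : ∃ l, P.verts = l ++ [P.last] := by
  have := P.getLast_eq
  rw [List.getLast?_eq_some_iff] at this
  obtain ⟨l, hl⟩ := this
  exact ⟨l, hl⟩

theorem Path.map_src (P : G.Path) : P.darts.map (fun d => d.2.1) = P.verts.dropLast :=
  P.isWalk.map_src

theorem Path.map_dst (P : G.Path) : P.darts.map (fun d => d.2.2) = P.verts.tail :=
  P.isWalk.map_dst

theorem Path.src_ne_last (P : G.Path) {d : E × V × V} (hd : d ∈ P.darts) : d.2.1 ≠ P.last := by
  intro h
  have h1 : d.2.1 ∈ P.verts.dropLast := by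
    rw [← P.map_src]; exact List.mem_map_of_mem hd
  obtain ⟨l, hl⟩ := P.verts_last
  have hn := P.nodup
  rw [hl] at h1 hn
  simp at h1
  rw [List.nodup_append] at hn
  exact hn.2.2 _ h1 _ (by simp) h

theorem Path.dst_ne_first (P : G.Path) {d : E × V × V} (hd : d ∈ P.darts) : d.2.2 ≠ P.first := by
  intro h
  have h1 : d.2.2 ∈ P.verts.tail := by
    rw [← P.map_dst]; exact List.mem_map_of_mem hd
  obtain ⟨l, hl⟩ := P.verts_head
  have hn := P.nodup
  rw [hl] at h1 hn
  simp at h1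
  rw [List.nodup_cons] at hn
  exact hn.1 (h ▸ h1)

theorem Path.mem_inner_iff (P : G.Path) (x : V) :
    x ∈ P.inner ↔ (∃ d ∈ P.darts, d.2.1 = x) ∧ (∃ d ∈ P.darts, d.2.2 = x) := by
  have e1 : (∃ d ∈ P.darts, d.2.1 = x) ↔ x ∈ P.verts.dropLast := by
    rw [← P.map_src, List.mem_map]
  have e2 : (∃ d ∈ P.darts, d.2.2 = x) ↔ x ∈ P.verts.tail := by
    rw [← P.map_dst, List.mem_map]
  rw [e1, e2, Path.inner, List.drop_one]
  have hn := P.nodup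
  obtain ⟨l, hl⟩ := P.verts_head
  obtain ⟨m, hm⟩ := P.verts_last
  rw [hl] at hn hm ⊢
  rcases List.eq_nil_or_concat l with rfl | ⟨l', c, rfl⟩
  · simp
  · have : P.first :: l' = m ∧ c = P.last := by
      have h2 : (P.first :: l') ++ [c] = m ++ [P.last] := by simpa using hm
      have := List.append_inj' h2 rfl
      simpa using this
    simp only [List.tail_cons, List.concat_eq_append, List.dropLast_concat]
    have e3 : (P.first :: (l' ++ [c])).dropLast = P.first :: l' := by
      rw [← List.cons_append, List.dropLast_concat]
    rw [e3]
    simp only [List.concat_eq_append, List.nodup_cons, List.nodup_append, List.mem_append,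
      List.mem_cons, List.mem_singleton] at hn ⊢
    constructor
    · intro h; exact ⟨Or.inr h, Or.inl h⟩
    · rintro ⟨h1 | h1, h2 | h2⟩
      · exact h2
      · subst h1; exact absurd (Or.inr h2) hn.1
      · exact h2
      · exact h1

theorem abPath_iff (P : G.Path) {A B : Set V} (hAB : Disjoint A B) :
    G.IsABPath A B P ↔ P.first ∈ A ∧ P.last ∈ B ∧ ∀ d ∈ P.darts, d.2.1 ∉ B ∧ d.2.2 ∉ A := by
  constructor
  · rintro ⟨h1, h2, h3⟩
    refine ⟨h1, h2, fun d hd => ⟨fun hb => ?_, fun ha => ?_⟩⟩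
    · by_cases hc : ∃ d' ∈ P.darts, d'.2.2 = d.2.1
      · exact h3 _ ((P.mem_inner_iff _).2 ⟨⟨d, hd, rfl⟩, hc⟩) (Or.inr hb)
      · have : d.2.1 = P.first := by
          have h1 : d.2.1 ∈ P.verts := (P.isWalk.mem_verts d hd).1
          obtain ⟨l, hl⟩ := P.verts_head
          have : ¬ d.2.1 ∈ P.verts.tail := by
            rw [← P.map_dst, List.mem_map]; exact hc
          rw [hl] at h1 this
          simp at h1 this
          tauto
        exact Set.disjoint_left.1 hAB h1 (this ▸ hb)
    · by_cases hc : ∃ d' ∈ P.darts, d'.2.1 = d.2.2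
      · exact h3 _ ((P.mem_inner_iff _).2 ⟨hc, ⟨d, hd, rfl⟩⟩) (Or.inl ha)
      · have : d.2.2 = P.last := by
          have h1 : d.2.2 ∈ P.verts := (P.isWalk.mem_verts d hd).2
          obtain ⟨l, hl⟩ := P.verts_last
          have : ¬ d.2.2 ∈ P.verts.dropLast := by
            rw [← P.map_src, List.mem_map]; exact hc
          rw [hl] at h1 this
          simp at h1 this
          tauto
        exact Set.disjoint_left.1 hAB ha (this ▸ h2)
  · rintro ⟨h1, h2, h3⟩
    refine ⟨h1, h2, fun x hx => ?_⟩
    rw [P.mem_inner_iff] at hx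
    obtain ⟨⟨d, hd, rfl⟩, ⟨d', hd', h'⟩⟩ := hx
    rintro (h | h)
    · exact (h3 d' hd').2 (h' ▸ h)
    · exact (h3 d hd).1 h

/-- In a path, a dart whose source is in `A` starts at `first` for an `AB`-path. -/
theorem abPath_src (P : G.Path) {A B : Set V} (hAB : Disjoint A B) (h : G.IsABPath A B P)
    {d : E × V × V} (hd : d ∈ P.darts) (hs : d.2.1 ∈ A) : d.2.1 = P.first := by
  have h3 := ((abPath_iff P hAB).1 h).2.2
  have h1 : d.2.1 ∈ P.verts := (P.isWalk.mem_verts d hd).1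
  obtain ⟨l, hl⟩ := P.verts_head
  have : ¬ d.2.1 ∈ P.verts.tail := by
    rw [← P.map_dst, List.mem_map]
    rintro ⟨d', hd', h'⟩
    exact (h3 d' hd').2 (by rw [h']; exact hs)
  rw [hl] at h1 this
  simp at h1 this
  tauto

theorem abPath_dst (P : G.Path) {A B : Set V} (hAB : Disjoint A B) (h : G.IsABPath A B P)
    {d : E × V × V} (hd : d ∈ P.darts) (hs : d.2.2 ∈ B) : d.2.2 = P.last := by
  have h3 := ((abPath_iff P hAB).1 h).2.2
  have h1 : d.2.2 ∈ P.verts := (P.isWalk.mem_verts d hd).2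
  obtain ⟨l, hl⟩ := P.verts_last
  have : ¬ d.2.2 ∈ P.verts.dropLast := by
    rw [← P.map_src, List.mem_map]
    rintro ⟨d', hd', h'⟩
    exact (h3 d' hd').1 (by rw [h']; exact hs)
  rw [hl] at h1 this
  simp at h1 this
  tauto

/-- Suffix of a walk starting at a given vertex. -/
theorem IsWalk.suffix {vs : List V} {es : List E} (h : G.IsWalk vs es) :
    ∀ a ∈ vs, ∃ vs' es', G.IsWalk vs' es' ∧ vs'.Sublist vs ∧ vs'.head? = some a ∧
      vs'.getLast? = vs.getLast? ∧ ∀ d ∈ dartsL vs' es', d ∈ dartsL vs es := by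
  induction h with
  | nil v => 
    intro a ha
    simp at ha
    exact ⟨[v], [], IsWalk.nil v, List.Sublist.refl _, by simp [ha], rfl, by simp⟩
  | @cons u w vs e es h1 h2 ih =>
    intro a ha
    rw [List.mem_cons] at ha
    rcases ha with rfl | ha
    · exact ⟨_, _, IsWalk.cons h1 h2, List.Sublist.refl _, by simp, rfl, by simp⟩
    · obtain ⟨vs', es', i1, i2, i3, i4, i5⟩ := ih a ha
      refine ⟨vs', es', i1, i2.cons _, i3, ?_, ?_⟩
      · rw [i4, List.getLast?_cons_cons]
      · intro d hd
        simp only [dartsL, List.mem_cons]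
        exact Or.inr (i5 d hd)

/-- Reachability along valid darts gives a path. -/
theorem exists_path_of_reach (D : E → V → V → Prop) (hD : ∀ e u w, D e u w → G.I e = s(u, w))
    {a b : V} (h : Relation.ReflTransGen (fun u w => ∃ e, D e u w) a b) :
    ∃ P : G.Path, P.first = a ∧ P.last = b ∧ ∀ d ∈ P.darts, D d.1 d.2.1 d.2.2 := by
  induction h using Relation.ReflTransGen.head_induction_on with
  | refl =>
    exact ⟨⟨b, b, [b], [], IsWalk.nil b, by simp, by simp, by simp⟩, rfl, rfl,
      by simp [Path.darts, dartsL]⟩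
  | @head a c hac _ ih =>
    obtain ⟨e, he⟩ := hac
    obtain ⟨P, rfl, rfl, hP⟩ := ih
    by_cases ha : a ∈ P.verts
    · obtain ⟨vs', es', i1, i2, i3, i4, i5⟩ := P.isWalk.suffix a ha
      exact ⟨⟨a, P.last, vs', es', i1, P.nodup.sublist i2, i3, i4.trans P.getLast_eq⟩, rfl, rfl,
        fun d hd => hP d (i5 d hd)⟩
    · obtain ⟨l, hl⟩ := P.verts_head
      have hw := P.isWalk
      have hn := P.nodup
      have hg := P.getLast_eq
      rw [hl] at hw hn hg ha
      refine ⟨⟨a, P.last, a :: P.first :: l, e :: P.edges, IsWalk.cons (hD _ _ _ he) hw,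
        List.nodup_cons.2 ⟨ha, hn⟩, by simp, by rw [List.getLast?_cons_cons, hg]⟩, rfl, rfl, ?_⟩
      intro d hd
      simp only [Path.darts, dartsL, List.mem_cons] at hd
      rcases hd with rfl | hd
      · exact he
      · exact hP d (by rw [Path.darts, hl]; exact hd)

/-- Steps along darts of `L` not leaving `B` and not entering `A`. -/
def SubRel (L : List (E × V × V)) (A B : Set V) (p q : V) : Prop :=
  ∃ e, (e, p, q) ∈ L ∧ p ∉ B ∧ q ∉ A

theorem IsWalk.sub_reach {vs : List V} {es : List E} (h : G.IsWalk vs es) (A B : Set V) :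
    ∀ b ∈ B, vs.getLast? = some b → ∀ v, vs.head? = some v →
    (∃ a ∈ A, ∃ b ∈ B, Relation.ReflTransGen (SubRel (dartsL vs es) A B) a b) ∨
    (∃ b ∈ B, Relation.ReflTransGen (SubRel (dartsL vs es) A B) v b) := by
  induction h with
  | nil v =>
    intro b hb h1 v' h2
    simp at h1 h2
    subst h1; subst h2
    exact Or.inr ⟨_, hb, Relation.ReflTransGen.refl⟩
  | @cons u w vs e es h1 h2 ih =>
    intro b hb hl v hv
    simp at hv
    subst hv
    rw [List.getLast?_cons_cons] at hl
    have mono : ∀ x y, Relation.ReflTransGen (SubRel (dartsL (w :: vs) es) A B) x y →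
        Relation.ReflTransGen (SubRel (dartsL (u :: w :: vs) (e :: es)) A B) x y := by
      intro x y h
      refine Relation.ReflTransGen.mono ?_ _ _ h
      rintro p q ⟨e', h1, h2, h3⟩
      refine ⟨e', ?_, h2, h3⟩
      simp only [dartsL, List.mem_cons]
      exact Or.inr h1
    rcases ih b hb hl w (by simp) with ⟨a, ha, b, hb, hr⟩ | ⟨b, hb, hr⟩
    · exact Or.inl ⟨a, ha, b, hb, mono _ _ hr⟩
    · by_cases hw : w ∈ A
      · exact Or.inl ⟨w, hw, b, hb, mono _ _ hr⟩
      · by_cases hu : u ∈ B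
        · exact Or.inr ⟨u, hu, Relation.ReflTransGen.refl⟩
        · refine Or.inr ⟨b, hb, Relation.ReflTransGen.head ?_ (mono _ _ hr)⟩
          exact ⟨e, by simp [dartsL], hu, hw⟩

/-- A path from `A` to `B` contains an `AB`-path. -/
theorem exists_sub_abPath (P : G.Path) {A B : Set V} (hAB : Disjoint A B)
    (h1 : P.first ∈ A) (h2 : P.last ∈ B) :
    ∃ Q : G.Path, G.IsABPath A B Q ∧ ∀ d ∈ Q.darts, d ∈ P.darts := by
  have key : ∃ a ∈ A, ∃ b ∈ B, Relation.ReflTransGen (SubRel P.darts A B) a b := by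
    rcases P.isWalk.sub_reach A B _ h2 P.getLast_eq _ P.head_eq with h | ⟨b, hb, h⟩
    · exact h
    · exact ⟨_, h1, b, hb, h⟩
  obtain ⟨a, ha, b, hb, hr⟩ := key
  obtain ⟨Q, rfl, rfl, hQ⟩ := exists_path_of_reach (G := G)
    (fun e p q => (e, p, q) ∈ P.darts ∧ p ∉ B ∧ q ∉ A) (fun e u w h => P.valid h.1) hr
  exact ⟨Q, (abPath_iff Q hAB).2 ⟨ha, hb, fun d hd => (hQ d hd).2⟩, fun d hd => (hQ d hd).1⟩

theorem edges_sub_of_darts {P Q : G.Path} (h : ∀ d ∈ Q.darts, d ∈ P.darts) :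
    ∀ e ∈ Q.edges, e ∈ P.edges := by
  intro e he
  obtain ⟨d, hd, rfl⟩ := Q.mem_edges.1 he
  exact P.mem_edges.2 ⟨d, h d hd, rfl⟩

theorem IsWalk.cross {vs : List V} {es : List E} (h : G.IsWalk vs es) (X : Set V) :
    ∀ a ∈ X, vs.head? = some a → ∀ b ∉ X, vs.getLast? = some b →
    ∃ d ∈ dartsL vs es, d.2.1 ∈ X ∧ d.2.2 ∉ X := by
  induction h with
  | nil v => intro a ha h1 b hb h2; simp at h1 h2; subst h1; subst h2; exact absurd ha hb
  | @cons u w vs e es h1 h2 ih =>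
    intro a ha h1 b hb h2
    simp at h1
    subst h1
    rw [List.getLast?_cons_cons] at h2
    by_cases hw : w ∈ X
    · obtain ⟨d, hd, h⟩ := ih w hw (by simp) b hb h2
      exact ⟨d, by simp [dartsL, hd], h⟩
    · exact ⟨(e, u, w), by simp [dartsL], ha, hw⟩

theorem Path.cross (P : G.Path) {X : Set V} (h1 : P.first ∈ X) (h2 : P.last ∉ X) :
    ∃ d ∈ P.darts, d.2.1 ∈ X ∧ d.2.2 ∉ X :=
  P.isWalk.cross X _ h1 P.head_eq _ h2 P.getLast_eq

theorem Path.cross_edge (P : G.Path) {X : Set V} (h1 : P.first ∈ X) (h2 : P.last ∉ X) :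
    ∃ e ∈ P.edges, e ∈ G.edgeCut X := by
  obtain ⟨d, hd, h⟩ := P.cross h1 h2
  exact ⟨d.1, P.mem_edges.2 ⟨d, hd, rfl⟩, d.2.1, d.2.2, P.valid hd, h⟩

theorem Path.mem_cut (P : G.Path) {X : Set V} {e : E} (he : e ∈ P.edges) (hX : e ∈ G.edgeCut X) :
    ∃ d ∈ P.darts, d.1 = e ∧ ((d.2.1 ∈ X ∧ d.2.2 ∉ X) ∨ (d.2.1 ∉ X ∧ d.2.2 ∈ X)) := by
  obtain ⟨d, hd, rfl⟩ := P.mem_edges.1 he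
  obtain ⟨u, w, h, hu, hw⟩ := hX
  refine ⟨d, hd, rfl, ?_⟩
  rw [P.valid hd, Sym2.eq_iff] at h
  rcases h with ⟨h1, h2⟩ | ⟨h1, h2⟩
  · left; rw [h1, h2]; exact ⟨hu, hw⟩
  · right; rw [h1, h2]; exact ⟨hw, hu⟩

/-- An `AB`-path has a unique edge in `δ(A)`. -/
theorem abPath_unique_first (P : G.Path) {A B : Set V} (hAB : Disjoint A B)
    (h : G.IsABPath A B P) {e e' : E} (he : e ∈ P.edges) (hX : e ∈ G.edgeCut A)
    (he' : e' ∈ P.edges) (hX' : e' ∈ G.edgeCut A) : e = e' := by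
  have h3 := ((abPath_iff P hAB).1 h).2.2
  obtain ⟨d, hd, rfl, h1⟩ := P.mem_cut he hX
  obtain ⟨d', hd', rfl, h2⟩ := P.mem_cut he' hX'
  have a1 : d.2.1 ∈ A := by
    rcases h1 with h1 | h1
    · exact h1.1
    · exact absurd h1.2 (h3 d hd).2
  have a2 : d'.2.1 ∈ A := by
    rcases h2 with h1 | h1
    · exact h1.1
    · exact absurd h1.2 (h3 d' hd').2
  rw [P.darts_src_inj hd hd' ((abPath_src P hAB h hd a1).trans (abPath_src P hAB h hd' a2).symm)]

/-- An `A(Xᶜ)`-path has a unique edge in `δ(X)`. -/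
theorem abPath_unique_last (P : G.Path) {A X : Set V} (hAB : Disjoint A Xᶜ)
    (h : G.IsABPath A Xᶜ P) {e e' : E} (he : e ∈ P.edges) (hX : e ∈ G.edgeCut X)
    (he' : e' ∈ P.edges) (hX' : e' ∈ G.edgeCut X) : e = e' := by
  have h3 := ((abPath_iff P hAB).1 h).2.2
  obtain ⟨d, hd, rfl, h1⟩ := P.mem_cut he hX
  obtain ⟨d', hd', rfl, h2⟩ := P.mem_cut he' hX'
  have a1 : d.2.2 ∈ Xᶜ := by
    rcases h1 with h1 | h1
    · exact h1.2
    · exact absurd h1.1 (h3 d hd).1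
  have a2 : d'.2.2 ∈ Xᶜ := by
    rcases h2 with h1 | h1
    · exact h1.2
    · exact absurd h1.1 (h3 d' hd').1
  rw [P.darts_dst_inj hd hd' ((abPath_dst P hAB h hd a1).trans (abPath_dst P hAB h hd' a2).symm)]

/-- Parity of crossings. -/
theorem IsWalk.parity {vs : List V} {es : List E} (h : G.IsWalk vs es) (X : Set V) :
    ∀ a, vs.head? = some a → ∀ b, vs.getLast? = some b →
    (Even (es.filter (fun e => e ∈ G.edgeCut X)).length ↔ (a ∈ X ↔ b ∈ X)) := by
  induction h with
  | nil v => intro a h1 b h2; simp at h1 h2; subst h1; subst h2; simp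
  | @cons u w vs e es h1 h2 ih =>
    intro a ha b hb
    simp at ha
    subst ha
    rw [List.getLast?_cons_cons] at hb
    have ih' := ih w (by simp) b hb
    have hc : e ∈ G.edgeCut X ↔ ¬ (u ∈ X ↔ w ∈ X) := by
      constructor
      · rintro ⟨p, q, h, hp, hq⟩
        rw [h1, Sym2.eq_iff] at h
        rcases h with ⟨rfl, rfl⟩ | ⟨rfl, rfl⟩ <;> tauto
      · intro h
        by_cases hu : u ∈ X
        · exact ⟨u, w, h1, hu, by tauto⟩
        · exact ⟨w, u, by rw [h1, Sym2.eq_swap], by tauto, hu⟩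
    rw [List.filter_cons]
    by_cases he : e ∈ G.edgeCut X
    · simp only [he, decide_true, if_true, List.length_cons, Nat.even_add_one, ih']
      tauto
    · simp only [he, decide_false, if_false, Bool.false_eq_true, ih']
      tauto

theorem Path.parity (P : G.Path) {X : Set V} (h1 : P.first ∉ X) (h2 : P.last ∉ X) :
    ({e | e ∈ P.edges} ∩ G.edgeCut X).Finite ∧
    Even ({e | e ∈ P.edges} ∩ G.edgeCut X).ncard := by
  have h := (P.isWalk.parity X _ P.head_eq _ P.getLast_eq).2 (by tauto)
  have e1 : {e | e ∈ P.edges} ∩ G.edgeCut X =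
      ((P.edges.filter (fun e => e ∈ G.edgeCut X)).toFinset : Set E) := by
    ext e; simp
  rw [e1]
  refine ⟨Finset.finite_toSet _, ?_⟩
  rw [Set.ncard_coe_finset, List.toFinset_card_of_nodup]
  · exact h
  · exact (P.isWalk.edges_nodup P.nodup).filter _

end Basics


section Flow

variable {V : Type u} {E : Type v} {G : Grapht V E}

/-- Net out-degree of a finite set of darts at `x`. -/
noncomputable def net (D : Finset (E × V × V)) (x : V) : ℤ := ∑ d ∈ D, ex x d

theorem net_erase (D : Finset (E × V × V)) (x : V) {d : E × V × V} (hd : d ∈ D) :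
    net (D.erase d) x = net D x - ex x d := by
  rw [net, net, ← Finset.add_sum_erase D _ hd]; ring

theorem exists_trail (A B : Set V) :
    ∀ n, ∀ D : Finset (E × V × V), D.card = n → ∀ v, v ∉ A → (∀ d ∈ D, d.2.2 ∉ A) →
    (∀ x, x ∉ A → x ∉ B → net D x = if v = x then 1 else 0) →
    ∃ D' ⊆ D, (∀ x, x ∉ A → x ∉ B → net D' x = 0) ∧
      (∀ d ∈ D, d ∉ D' → d.2.1 ∉ A) ∧
      ∃ b ∈ B, Relation.ReflTransGen (fun p q => ∃ e, (e, p, q) ∈ D ∧ (e, p, q) ∉ D') v b := by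
  intro n
  induction n with
  | zero =>
    intro D hD v hv h1 h2
    rw [Finset.card_eq_zero] at hD
    subst hD
    by_cases hb : v ∈ B
    · exact ⟨∅, by simp, by simp [net], by simp, v, hb, Relation.ReflTransGen.refl⟩
    · have := h2 v hv hb
      simp [net] at this
  | succ n ih =>
    intro D hD v hv h1 h2
    by_cases hb : v ∈ B
    · refine ⟨D, le_refl _, ?_, fun d h h' => absurd h h', v, hb, Relation.ReflTransGen.refl⟩
      intro x hx hx'
      rw [h2 x hx hx', if_neg]
      rintro rfl; exact hx' hb
    · have hs := h2 v hv hb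
      rw [if_pos rfl] at hs
      have : ∃ d ∈ D, d.2.1 = v := by
        by_contra hcon
        push Not at hcon
        have : net D v ≤ 0 := by
          refine Finset.sum_nonpos fun d hd => ?_
          rw [ex, if_neg (hcon d hd)]
          split_ifs <;> simp
        omega
      obtain ⟨⟨e, v', w⟩, hd, hv'⟩ := this
      simp only at hv'
      subst hv'
      have hw := h1 _ hd
      obtain ⟨D', s1, s2, s3, b, hb', s4⟩ := ih (D.erase (e, v', w))
        (by rw [Finset.card_erase_of_mem hd, hD]; rfl) w hw
        (fun d hd => h1 d (Finset.mem_of_mem_erase hd)) (by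
          intro x hx hx'
          rw [net_erase _ _ hd, h2 x hx hx', ex]; simp)
      refine ⟨D', fun d h => Finset.mem_of_mem_erase (s1 h), s2, ?_, b, hb', ?_⟩
      · intro d hd1 hd2
        by_cases hdd : d = (e, v', w)
        · rw [hdd]; exact hv
        · exact s3 d (Finset.mem_erase.2 ⟨hdd, hd1⟩) hd2
      · refine Relation.ReflTransGen.head ⟨e, hd, fun h => ?_⟩
          (Relation.ReflTransGen.mono ?_ _ _ s4)
        · exact absurd (s1 h) (by simp)
        · rintro p q ⟨e', h1, h2⟩
          exact ⟨e', Finset.mem_of_mem_erase h1, h2⟩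

theorem exists_peel {A B : Set V} (hAB : Disjoint A B) :
    ∀ n, ∀ D : Finset (E × V × V), D.card = n → (∀ d ∈ D, G.I d.1 = s(d.2.1, d.2.2)) →
    (∀ d ∈ D, ∀ d' ∈ D, d.1 = d'.1 → d = d') →
    (∀ d ∈ D, d.2.1 ∉ B ∧ d.2.2 ∉ A) →
    (∀ x, x ∉ A → x ∉ B → net D x = 0) →
    ∃ Ps : Set G.Path, G.EdgeDisjoint Ps ∧ (∀ P ∈ Ps, G.IsABPath A B P) ∧
      (∀ P ∈ Ps, ∀ e ∈ P.edges, ∃ d ∈ D, d.1 = e) ∧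
      (∀ d ∈ D, d.2.1 ∈ A → ∃ P ∈ Ps, d.1 ∈ P.edges) := by
  intro n
  induction n using Nat.strong_induction_on with
  | _ n ih =>
    intro D hD hval hinj hdir hnet
    by_cases hex : ∃ d ∈ D, d.2.1 ∈ A
    · obtain ⟨⟨e, a, w⟩, hd, ha⟩ := hex
      simp only at ha
      obtain ⟨D', s1, s2, s3, b, hb, s4⟩ := exists_trail A B _ (D.erase (e, a, w)) rfl w
        (hdir _ hd).2 (fun d h => (hdir d (Finset.mem_of_mem_erase h)).2) (by
          intro x hx hx'
          have : a ≠ x := by rintro rfl; exact hx ha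
          rw [net_erase _ _ hd, hnet x hx hx', ex]; simp [this])
      have hnd : (e, a, w) ∉ D' := fun h => absurd (s1 h) (by simp)
      have hsub : D' ⊆ D := fun d h => Finset.mem_of_mem_erase (s1 h)
      have hr : Relation.ReflTransGen (fun p q => ∃ e, (e, p, q) ∈ D ∧ (e, p, q) ∉ D') a b := by
        refine Relation.ReflTransGen.head ⟨e, hd, hnd⟩ (Relation.ReflTransGen.mono ?_ _ _ s4)
        rintro p q ⟨e', h1, h2⟩
        exact ⟨e', Finset.mem_of_mem_erase h1, h2⟩
      obtain ⟨P, rfl, rfl, hP⟩ := exists_path_of_reach (G := G)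
        (fun e p q => (e, p, q) ∈ D ∧ (e, p, q) ∉ D') (fun e u w h => hval _ h.1) hr
      have hPAB : G.IsABPath A B P :=
        (abPath_iff P hAB).2 ⟨ha, hb, fun d hd => hdir _ (hP d hd).1⟩
      have heP : e ∈ P.edges := by
        obtain ⟨d, hd1, hd2, hd3⟩ := P.cross ha (fun h => Set.disjoint_left.1 hAB h hb)
        by_cases hdd : d = (e, P.first, w)
        · exact P.mem_edges.2 ⟨d, hd1, by rw [hdd]⟩
        · exact absurd hd2 (s3 d (Finset.mem_erase.2 ⟨hdd, (hP d hd1).1⟩) (hP d hd1).2)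
      have hlt : D'.card < n := by
        rw [← hD]
        exact Finset.card_lt_card (Finset.ssubset_iff_subset_ne.2
          ⟨hsub, fun h => hnd (h ▸ hd)⟩)
      obtain ⟨Ps, q1, q2, q3, q4⟩ := ih _ hlt D' rfl (fun d h => hval d (hsub h))
        (fun d h d' h' => hinj d (hsub h) d' (hsub h')) (fun d h => hdir d (hsub h)) s2
      have hdis : ∀ Q ∈ Ps, ∀ e, e ∈ P.edges → e ∉ Q.edges := by
        intro Q hQ e he he'
        obtain ⟨d, hd, rfl⟩ := P.mem_edges.1 he
        obtain ⟨d', hd', h⟩ := q3 Q hQ _ he'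
        have := hinj d' (hsub hd') d (hP d hd).1 h
        exact (hP d hd).2 (this ▸ hd')
      refine ⟨insert P Ps, ?_, ?_, ?_, ?_⟩
      · intro Q hQ R hR hne e he he'
        rcases hQ with rfl | hQ <;> rcases hR with rfl | hR
        · exact hne rfl
        · exact hdis R hR e he he'
        · exact hdis Q hQ e he' he
        · exact q1 hQ hR hne e he he'
      · rintro Q (rfl | hQ)
        · exact hPAB
        · exact q2 Q hQ
      · rintro Q (rfl | hQ) e he
        · obtain ⟨d, hd, rfl⟩ := Q.mem_edges.1 he
          exact ⟨d, (hP d hd).1, rfl⟩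
        · obtain ⟨d, hd, h⟩ := q3 Q hQ e he
          exact ⟨d, hsub hd, h⟩
      · intro d hdD hdA
        by_cases hdD' : d ∈ D'
        · obtain ⟨Q, hQ, h⟩ := q4 d hdD' hdA
          exact ⟨Q, Or.inr hQ, h⟩
        · by_cases hdd : d = (e, P.first, w)
          · exact ⟨P, Or.inl rfl, by rw [hdd]; exact heP⟩
          · exact absurd hdA (s3 d (Finset.mem_erase.2 ⟨hdd, hdD⟩) hdD')
    · push Not at hex
      exact ⟨∅, by simp [EdgeDisjoint], by simp, by simp, fun d h h' => absurd h' (hex d h)⟩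

/-- Reversal of a dart. -/
def rv (d : E × V × V) : E × V × V := (d.1, d.2.2, d.2.1)

theorem rv_rv (d : E × V × V) : rv (rv d) = d := rfl

theorem ex_rv (x : V) (d : E × V × V) : ex x (rv d) = - ex x d := by
  exact (neg_sub _ _).symm

/-- A system of edge-disjoint `AB`-paths with edges in `S`. -/
def Sys (G : Grapht V E) (A B : Set V) (S : Set E) (Ps : Set G.Path) : Prop :=
  G.EdgeDisjoint Ps ∧ (∀ P ∈ Ps, G.IsABPath A B P) ∧ ∀ P ∈ Ps, ∀ e ∈ P.edges, e ∈ S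

/-- `Ps` covers `F`. -/
def Cov (G : Grapht V E) (F : Set E) (Ps : Set G.Path) : Prop :=
  ∀ e ∈ F, ∃ P ∈ Ps, e ∈ P.edges

theorem net_augment (D W : Finset (E × V × V)) (x : V)
    (hdis : Disjoint (D.filter (fun d => rv d ∉ W)) (W.filter (fun d => rv d ∉ D))) :
    net (D.filter (fun d => rv d ∉ W) ∪ W.filter (fun d => rv d ∉ D)) x
      = net D x + net W x := by
  have h0 : ∑ d ∈ D.filter (fun d => ¬ rv d ∉ W), ex x d
      = - ∑ d ∈ W.filter (fun d => ¬ rv d ∉ D), ex x d := by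
    rw [← Finset.sum_neg_distrib]
    refine Finset.sum_bij' (fun d _ => rv d) (fun d _ => rv d) ?_ ?_ ?_ ?_ ?_
    · intro d hd; simp only [Finset.mem_filter, not_not] at hd ⊢
      exact ⟨hd.2, by rw [rv_rv]; exact hd.1⟩
    · intro d hd; simp only [Finset.mem_filter, not_not] at hd ⊢
      exact ⟨hd.2, by rw [rv_rv]; exact hd.1⟩
    · intros; rfl
    · intros; rfl
    · intro d _; rw [ex_rv]; ring
  have h1 := Finset.sum_filter_add_sum_filter_not D (fun d => rv d ∉ W) (ex x)
  have h2 := Finset.sum_filter_add_sum_filter_not W (fun d => rv d ∉ D) (ex x)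
  rw [net, Finset.sum_union hdis, net, net]
  linarith

/-- Dart in path of a system determined by edge. -/
theorem Sys.dart_inj {A B : Set V} {S : Set E} {Ps : Set G.Path} (h : G.Sys A B S Ps)
    {P Q : G.Path} (hP : P ∈ Ps) (hQ : Q ∈ Ps) {d d' : E × V × V} (hd : d ∈ P.darts)
    (hd' : d' ∈ Q.darts) (he : d.1 = d'.1) : P = Q ∧ d = d' := by
  have : P = Q := by
    by_contra hne
    exact h.1 hP hQ hne d.1 (P.mem_edges.2 ⟨d, hd, rfl⟩) (Q.mem_edges.2 ⟨d', hd', he.symm⟩)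
  subst this
  exact ⟨rfl, P.darts_edge_inj hd hd' he⟩

theorem Sys.eq_of_mem {A B : Set V} {S : Set E} {Ps : Set G.Path} (h : G.Sys A B S Ps)
    {P Q : G.Path} (hP : P ∈ Ps) (hQ : Q ∈ Ps) {e : E} (h1 : e ∈ P.edges) (h2 : e ∈ Q.edges) :
    P = Q := by
  by_contra hne
  exact h.1 hP hQ hne e h1 h2

/-- Net of the darts of finitely many paths of a system. -/
theorem Sys.net_zero {A B : Set V} {S : Set E} {Ps : Set G.Path} (h : G.Sys A B S Ps)
    (F : Finset G.Path) (hF : ∀ P ∈ F, P ∈ Ps) {x : V} (hA : x ∉ A) (hB : x ∉ B) :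
    net (F.biUnion (fun P => P.darts.toFinset)) x = 0 := by
  rw [net, Finset.sum_biUnion]
  · refine Finset.sum_eq_zero fun P hP => ?_
    have h2 := h.2.1 P (hF P hP)
    rw [List.sum_toFinset _ P.darts_nodup, P.sum_ex, if_neg, if_neg]
    · simp
    · rintro rfl; exact hB h2.2.1
    · rintro rfl; exact hA h2.1
  · intro P hP Q hQ hne
    rw [Function.onFun, Finset.disjoint_left]
    intro d hd hd'
    rw [List.mem_toFinset] at hd hd'
    exact hne (h.dart_inj (hF P hP) (hF Q hQ) hd hd' rfl).1

theorem IsWalk.out_stays {vs : List V} {es : List E} (h : G.IsWalk vs es) (X : Set V) :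
    (∀ d ∈ dartsL vs es, d.2.2 ∈ X → d.2.1 ∈ X) → ∀ a, vs.head? = some a → a ∉ X →
    ∀ d ∈ dartsL vs es, d.2.1 ∉ X := by
  induction h with
  | nil v => simp [dartsL]
  | @cons u w vs e es h1 h2 ih =>
    intro hX a ha haX d hd
    simp at ha
    subst ha
    simp only [dartsL, List.mem_cons] at hd hX
    rcases hd with rfl | hd
    · exact haX
    · exact ih (fun d hd => hX d (Or.inr hd)) w (by simp)
        (fun hw => haX (hX (e, u, w) (Or.inl rfl) hw)) d hd

theorem IsWalk.cross_unique {vs : List V} {es : List E} (h : G.IsWalk vs es) (X : Set V) :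
    (∀ d ∈ dartsL vs es, d.2.2 ∈ X → d.2.1 ∈ X) →
    ∀ d ∈ dartsL vs es, ∀ d' ∈ dartsL vs es, d.2.1 ∈ X → d.2.2 ∉ X → d'.2.1 ∈ X → d'.2.2 ∉ X →
    d = d' := by
  induction h with
  | nil v => simp [dartsL]
  | @cons u w vs e es h1 h2 ih =>
    intro hX d hd d' hd' a1 a2 a3 a4
    simp only [dartsL, List.mem_cons] at hd hd' hX
    have hX' : ∀ d ∈ dartsL (w :: vs) es, d.2.2 ∈ X → d.2.1 ∈ X := fun d hd => hX d (Or.inr hd)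
    rcases hd with rfl | hd <;> rcases hd' with rfl | hd'
    · rfl
    · exact absurd a3 (h2.out_stays X hX' w (by simp) a2 d' hd')
    · exact absurd a1 (h2.out_stays X hX' w (by simp) a4 d hd)
    · exact ih hX' d hd d' hd' a1 a2 a3 a4

/-- Augmentation lemma. -/
theorem augment {A B : Set V} (hAB : Disjoint A B) {S : Set E} {Ps : Set G.Path}
    (h : G.Sys A B S Ps) (e0 : E)
    (hcov : ∀ e ∈ G.edgeCut A, e ∈ S → e ≠ e0 → ∃ P ∈ Ps, e ∈ P.edges) :
    (∃ Ps', G.Sys A B S Ps' ∧ G.Cov (G.edgeCut A ∩ S) Ps') ∨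
    (∃ X : Set V, A ⊆ X ∧ Disjoint X B ∧ G.Cov (G.edgeCut X ∩ S) Ps ∧
      ∀ P ∈ Ps, ∃! e, e ∈ G.edgeCut X ∧ e ∈ P.edges) := by
  -- residual darts
  let R : E → V → V → Prop := fun e u w => (G.I e = s(u, w) ∧ e ∈ S ∧ u ∉ B ∧ w ∉ A) ∧
    ((∀ P ∈ Ps, e ∉ P.edges) ∨ ∃ P ∈ Ps, (e, w, u) ∈ P.darts)
  let X : Set V := {x | ∃ a ∈ A, Relation.ReflTransGen (fun u w => ∃ e, R e u w) a x}
  by_cases hX : Disjoint X B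
  · right
    have hAX : A ⊆ X := fun a ha => ⟨a, ha, Relation.ReflTransGen.refl⟩
    have hstep : ∀ e u w, u ∈ X → R e u w → w ∈ X := by
      rintro e u w ⟨a, ha, hr⟩ hR
      exact ⟨a, ha, hr.tail ⟨e, hR⟩⟩
    have hnoent : ∀ P ∈ Ps, ∀ d ∈ P.darts, d.2.2 ∈ X → d.2.1 ∈ X := by
      intro P hP d hd hdX
      by_cases hA : d.2.1 ∈ A
      · exact hAX hA
      · refine hstep d.1 d.2.2 d.2.1 hdX ⟨⟨?_, h.2.2 P hP _ (P.mem_edges.2 ⟨d, hd, rfl⟩), ?_, hA⟩,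
          Or.inr ⟨P, hP, hd⟩⟩
        · rw [P.valid hd, Sym2.eq_swap]
        · exact Set.disjoint_left.1 hX hdX
    refine ⟨X, hAX, hX, ?_, ?_⟩
    · rintro e ⟨⟨u, w, he, hu, hw⟩, heS⟩
      by_contra hcon
      push Not at hcon
      exact hw (hstep e u w hu ⟨⟨he, heS, Set.disjoint_left.1 hX hu, fun h => hw (hAX h)⟩,
        Or.inl hcon⟩)
    · intro P hP
      have hPAB := h.2.1 P hP
      obtain ⟨e, he1, he2⟩ := P.cross_edge (X := X) (hAX hPAB.1)
        (fun h => Set.disjoint_left.1 hX h hPAB.2.1)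
      refine ⟨e, ⟨he2, he1⟩, ?_⟩
      rintro e' ⟨he2', he1'⟩
      obtain ⟨d, hd, rfl, hc⟩ := P.mem_cut he1 he2
      obtain ⟨d', hd', rfl, hc'⟩ := P.mem_cut he1' he2'
      have c1 := hnoent P hP d hd
      have c2 := hnoent P hP d' hd'
      rw [P.isWalk.cross_unique X (hnoent P hP) d hd d' hd' (by tauto) (by tauto) (by tauto)
        (by tauto)]
  · left
    rw [Set.not_disjoint_iff] at hX
    obtain ⟨b, ⟨a, ha, hr⟩, hb⟩ := hX
    obtain ⟨W, rfl, rfl, hW⟩ := exists_path_of_reach (G := G) R (fun e u w h => h.1.1) hr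
    have hWAB : G.IsABPath A B W :=
      (abPath_iff W hAB).2 ⟨ha, hb, fun d hd => (hW d hd).1.2.2⟩
    have hfin : {P | P ∈ Ps ∧ ∃ e ∈ W.edges, e ∈ P.edges}.Finite := by
      have : {P | P ∈ Ps ∧ ∃ e ∈ W.edges, e ∈ P.edges} ⊆
          ⋃ e ∈ {e | e ∈ W.edges}, {P | P ∈ Ps ∧ e ∈ P.edges} := by
        rintro P ⟨hP, e, he, he'⟩
        simp only [Set.mem_iUnion]
        exact ⟨e, he, hP, he'⟩
      refine Set.Finite.subset (Set.Finite.biUnion W.edges.finite_toSet ?_) this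
      intro e _
      refine Set.Subsingleton.finite ?_
      rintro P ⟨hP, hP'⟩ Q ⟨hQ, hQ'⟩
      exact h.eq_of_mem hP hQ hP' hQ'
    let F := hfin.toFinset
    have hFmem : ∀ P, P ∈ F ↔ P ∈ Ps ∧ ∃ e ∈ W.edges, e ∈ P.edges := by
      intro P; simp [F]
    let D := F.biUnion (fun P => P.darts.toFinset)
    have hDmem : ∀ d, d ∈ D ↔ ∃ P ∈ F, d ∈ P.darts := by
      intro d; simp [D]
    let W' := W.darts.toFinset
    have hW' : ∀ d, d ∈ W' ↔ d ∈ W.darts := by intro d; simp [W']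
    let D1 := D.filter (fun d => rv d ∉ W')
    let D2 := W'.filter (fun d => rv d ∉ D)
    have hD1 : ∀ d, d ∈ D1 ↔ d ∈ D ∧ rv d ∉ W' := by intro d; simp [D1]
    have hD2 : ∀ d, d ∈ D2 ↔ d ∈ W' ∧ rv d ∉ D := by intro d; simp [D2]
    have hcross : ∀ d ∈ D1, ∀ d' ∈ D2, d.1 ≠ d'.1 := by
      intro d hd d' hd' he
      rw [hD1] at hd; rw [hD2] at hd'
      obtain ⟨P, hPF, hP⟩ := (hDmem d).1 hd.1
      have hdW := (hW' d').1 hd'.1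
      have hPPs := ((hFmem P).1 hPF).1
      rcases (hW d' hdW).2 with hu | ⟨Q, hQ, hQd⟩
      · exact hu P hPPs (P.mem_edges.2 ⟨d, hP, he⟩)
      · obtain ⟨rfl, hdd⟩ := h.dart_inj hPPs hQ hP hQd he
        apply hd'.2
        rw [hDmem]
        exact ⟨P, hPF, hQd⟩
    have hdisj : Disjoint D1 D2 := by
      rw [Finset.disjoint_left]
      intro d h1 h2
      exact hcross d h1 d h2 rfl
    obtain ⟨Qs, q1, q2, q3, q4⟩ := exists_peel (G := G) hAB _ (D1 ∪ D2) rfl (by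
        intro d hd
        rw [Finset.mem_union, hD1, hD2] at hd
        rcases hd with hd | hd
        · obtain ⟨P, hPF, hP⟩ := (hDmem d).1 hd.1
          exact P.valid hP
        · exact W.valid ((hW' d).1 hd.1))
      (by
        intro d hd d' hd' he
        rw [Finset.mem_union] at hd hd'
        rcases hd with hd | hd <;> rcases hd' with hd' | hd'
        · rw [hD1] at hd hd'
          obtain ⟨P, hPF, hP⟩ := (hDmem d).1 hd.1
          obtain ⟨Q, hQF, hQ⟩ := (hDmem d').1 hd'.1
          exact (h.dart_inj ((hFmem P).1 hPF).1 ((hFmem Q).1 hQF).1 hP hQ he).2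
        · exact absurd he (hcross d hd d' hd')
        · exact absurd he.symm (hcross d' hd' d hd)
        · rw [hD2] at hd hd'
          exact W.darts_edge_inj ((hW' d).1 hd.1) ((hW' d').1 hd'.1) he)
      (by
        intro d hd
        rw [Finset.mem_union, hD1, hD2] at hd
        rcases hd with hd | hd
        · obtain ⟨P, hPF, hP⟩ := (hDmem d).1 hd.1
          exact ((abPath_iff P hAB).1 (h.2.1 P ((hFmem P).1 hPF).1)).2.2 d hP
        · exact (hW d ((hW' d).1 hd.1)).1.2.2)
      (by
        intro x hx hx'
        rw [net_augment D W' x hdisj, h.net_zero F (fun P hP => ((hFmem P).1 hP).1) hx hx', net,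
          List.sum_toFinset _ W.darts_nodup, W.sum_ex, if_neg, if_neg]
        · simp
        · rintro rfl; exact hx' hb
        · rintro rfl; exact hx ha)
    have hold : ∀ Q ∈ Qs, ∀ e ∈ Q.edges, (∃ P ∈ F, e ∈ P.edges) ∨ e ∈ W.edges := by
      intro Q hQ e he
      obtain ⟨d, hd, rfl⟩ := q3 Q hQ e he
      rw [Finset.mem_union, hD1, hD2] at hd
      rcases hd with hd | hd
      · obtain ⟨P, hPF, hP⟩ := (hDmem d).1 hd.1
        exact Or.inl ⟨P, hPF, P.mem_edges.2 ⟨d, hP, rfl⟩⟩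
      · exact Or.inr (W.mem_edges.2 ⟨d, (hW' d).1 hd.1, rfl⟩)
    have hdis : ∀ P ∈ Ps, P ∉ F → ∀ Q ∈ Qs, ∀ e, e ∈ P.edges → e ∉ Q.edges := by
      intro P hP hPF Q hQ e he he'
      rcases hold Q hQ e he' with ⟨P', hP', hh⟩ | hh
      · have := h.eq_of_mem hP ((hFmem P').1 hP').1 he hh
        exact hPF (this ▸ hP')
      · exact hPF ((hFmem P).2 ⟨hP, e, hh, he⟩)
    refine ⟨{P | P ∈ Ps ∧ P ∉ F} ∪ Qs, ⟨?_, ?_, ?_⟩, ?_⟩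
    · intro Q hQ R hR hne e he he'
      rcases hQ with hQ | hQ <;> rcases hR with hR | hR
      · exact h.1 hQ.1 hR.1 hne e he he'
      · exact hdis Q hQ.1 hQ.2 R hR e he he'
      · exact hdis R hR.1 hR.2 Q hQ e he' he
      · exact q1 hQ hR hne e he he'
    · rintro P (hP | hP)
      · exact h.2.1 P hP.1
      · exact q2 P hP
    · rintro P (hP | hP) e he
      · exact h.2.2 P hP.1 e he
      · rcases hold P hP e he with ⟨P', hP', hh⟩ | hh
        · exact h.2.2 P' ((hFmem P').1 hP').1 e hh
        · obtain ⟨d, hd, rfl⟩ := W.mem_edges.1 hh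
          exact (hW d hd).1.2.1
    · -- coverage
      have hold2 : ∀ P ∈ Ps, ∀ e ∈ P.edges, e ∈ G.edgeCut A →
          ∃ Q ∈ {P | P ∈ Ps ∧ P ∉ F} ∪ Qs, e ∈ Q.edges := by
        intro P hP e he heA
        by_cases hPF : P ∈ F
        · obtain ⟨d, hd, rfl, hdA⟩ := P.mem_cut he heA
          have hdir := ((abPath_iff P hAB).1 (h.2.1 P hP)).2.2 d hd
          have hsrc : d.2.1 ∈ A := by tauto
          obtain ⟨Q, hQ, hh⟩ := q4 d (by
            rw [Finset.mem_union, hD1]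
            refine Or.inl ⟨(hDmem d).2 ⟨P, hPF, hd⟩, fun hc => ?_⟩
            exact (hW _ ((hW' _).1 hc)).1.2.2.2 hsrc) hsrc
          exact ⟨Q, Or.inr hQ, hh⟩
        · exact ⟨P, Or.inl ⟨hP, hPF⟩, he⟩
      rintro e ⟨heA, heS⟩
      by_cases hee : ∃ P ∈ Ps, e ∈ P.edges
      · obtain ⟨P, hP, he⟩ := hee
        exact hold2 P hP e he heA
      · obtain ⟨d, hd, hd1, hd2⟩ := W.cross ha (fun h => Set.disjoint_left.1 hAB h hb)
        have hnoD : ∀ P ∈ Ps, d.1 ∉ P.edges := by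
          rcases (hW d hd).2 with hu | ⟨Q, hQ, hQd⟩
          · exact hu
          · exact absurd hd1 (((abPath_iff Q hAB).1 (h.2.1 Q hQ)).2.2 _ hQd).2
        have hde0 : d.1 = e0 := by
          by_contra hne
          obtain ⟨P, hP, hh⟩ := hcov d.1 ⟨d.2.1, d.2.2, W.valid hd, hd1, hd2⟩
            (hW d hd).1.2.1 hne
          exact hnoD P hP hh
        have hee0 : e = e0 := by
          by_contra hne
          exact hee (hcov e heA heS hne)
        obtain ⟨Q, hQ, hh⟩ := q4 d (by
          rw [Finset.mem_union, hD2]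
          refine Or.inr ⟨(hW' d).2 hd, fun hc => ?_⟩
          obtain ⟨P, hPF, hP⟩ := (hDmem _).1 hc
          exact hnoD P ((hFmem P).1 hPF).1 (P.mem_edges.2 ⟨_, hP, rfl⟩)) hd1
        exact ⟨Q, Or.inr hQ, by rw [hee0, ← hde0]; exact hh⟩

end Flow


section Main

variable {V : Type u} {E : Type v} {G : Grapht V E}

theorem em_of {A B X : Set V} {S : Set E} {Ps : Set G.Path} (hA : A ⊆ X) (hB : Disjoint X B)
    (h : G.Sys A B S Ps) (ho : G.Orthogonal (G.edgeCut X) Ps) :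
    G.IsEMABCut A B (G.edgeCut X) := by
  refine ⟨fun P hP => ?_, Ps, h.1, h.2.1, ho⟩
  obtain ⟨e, he, he'⟩ := P.cross_edge (hA hP.1) (fun h => Set.disjoint_left.1 hB h hP.2.1)
  exact ⟨e, he', he⟩

theorem Sys.mono {A B : Set V} {S S' : Set E} {Ps Ps' : Set G.Path} (h : G.Sys A B S Ps)
    (hP : Ps' ⊆ Ps) (hS : ∀ P ∈ Ps', ∀ e ∈ P.edges, e ∈ S') : G.Sys A B S' Ps' :=
  ⟨fun _ h1 _ h2 hne => h.1 (hP h1) (hP h2) hne, fun P hP' => h.2.1 P (hP hP'), hS⟩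

/-- Deleting one edge incident with `A`. -/
theorem drop_edge {A B : Set V} (hAB : Disjoint A B) {S : Set E} {Ps : Set G.Path}
    (h : G.Sys A B S Ps) (hcov : G.Cov (G.edgeCut A ∩ S) Ps) (f : E) (hf : f ∈ G.edgeCut A) :
    ∃ Ps', G.Sys A B (S \ {f}) Ps' ∧ G.Cov (G.edgeCut A ∩ (S \ {f})) Ps' := by
  refine ⟨{P | P ∈ Ps ∧ f ∉ P.edges}, h.mono (fun P hP => hP.1) ?_, ?_⟩
  · rintro P ⟨hP, hfP⟩ e he
    exact ⟨h.2.2 P hP e he, fun hef => hfP (by rw [← Set.mem_singleton_iff.1 hef]; exact he)⟩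
  · rintro e ⟨heA, heS, hef⟩
    obtain ⟨P, hP, he⟩ := hcov e ⟨heA, heS⟩
    refine ⟨P, ⟨hP, fun hfP => hef ?_⟩, he⟩
    exact abPath_unique_first P hAB (h.2.1 P hP) he heA hfP hf

/-- Deleting one edge not incident with `A`. -/
theorem delete_one {A B : Set V} (hAB : Disjoint A B) {S : Set E} {Ps : Set G.Path}
    (h : G.Sys A B S Ps) (hcov : G.Cov (G.edgeCut A ∩ S) Ps) (f : E) :
    (∃ Ps', G.Sys A B (S \ {f}) Ps' ∧ G.Cov (G.edgeCut A ∩ (S \ {f})) Ps') ∨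
    (∃ X : Set V, A ⊆ X ∧ Disjoint X B ∧ f ∈ G.edgeCut X ∧
      G.Orthogonal (G.edgeCut X ∩ S) Ps) := by
  by_cases hused : ∃ P ∈ Ps, f ∈ P.edges
  · obtain ⟨P, hP, hfP⟩ := hused
    have hPAB := h.2.1 P hP
    have hs : G.Sys A B (S \ {f}) (Ps \ {P}) := by
      refine h.mono Set.sdiff_subset ?_
      rintro Q ⟨hQ, hne⟩ e he
      refine ⟨h.2.2 Q hQ e he, fun hef => hne ?_⟩
      rw [Set.mem_singleton_iff] at hef
      subst hef
      exact h.eq_of_mem hQ hP he hfP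
    obtain ⟨e0, he0, he0'⟩ := P.cross_edge hPAB.1 (fun h => Set.disjoint_left.1 hAB h hPAB.2.1)
    rcases augment hAB hs e0 (by
      rintro e heA ⟨heS, hef⟩ hne
      obtain ⟨Q, hQ, he⟩ := hcov e ⟨heA, heS⟩
      refine ⟨Q, ⟨hQ, ?_⟩, he⟩
      intro hQP
      rw [Set.mem_singleton_iff] at hQP
      subst hQP
      exact hne (abPath_unique_first Q hAB hPAB he heA he0 he0')) with h1 | ⟨X, x1, x2, x3, x4⟩
    · exact Or.inl h1
    · right
      have hkey : ∀ e ∈ G.edgeCut X, e ∈ P.edges → e = f := by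
        intro e heX heP
        by_contra hne
        obtain ⟨Q, hQ, he⟩ := x3 e ⟨heX, h.2.2 P hP e heP, hne⟩
        exact hQ.2 (h.eq_of_mem hQ.1 hP he heP)
      obtain ⟨e1, he1, he1'⟩ := P.cross_edge (X := X) (x1 hPAB.1)
        (fun h => Set.disjoint_left.1 x2 h hPAB.2.1)
      have hfX : f ∈ G.edgeCut X := by
        rw [← hkey e1 he1' he1]; exact he1'
      refine ⟨X, x1, x2, hfX, ?_, ?_⟩
      · intro Q hQ
        by_cases hQP : Q = P
        · subst hQP
          exact ⟨f, ⟨⟨hfX, h.2.2 Q hQ f hfP⟩, hfP⟩, fun e he => hkey e he.1.1 he.2⟩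
        · obtain ⟨e, ⟨h1, h2⟩, h3⟩ := x4 Q ⟨hQ, hQP⟩
          exact ⟨e, ⟨⟨h1, h.2.2 Q hQ e h2⟩, h2⟩, fun e' he' => h3 e' ⟨he'.1.1, he'.2⟩⟩
      · rintro e ⟨heX, heS⟩
        by_cases hef : e = f
        · exact ⟨P, hP, hef ▸ hfP⟩
        · obtain ⟨Q, hQ, he⟩ := x3 e ⟨heX, heS, hef⟩
          exact ⟨Q, hQ.1, he⟩
  · left
    push Not at hused
    refine ⟨Ps, h.mono le_rfl ?_, fun e he => hcov e ⟨he.1, he.2.1⟩⟩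
    intro P hP e he
    exact ⟨h.2.2 P hP e he, fun hef => hused P hP (by rw [← Set.mem_singleton_iff.1 hef]; exact he)⟩

theorem Sys.sub {A B A' B' : Set V} {S : Set E} {Ps : Set G.Path} (h : G.Sys A B S Ps)
    (hd : Disjoint A' B') (hA : A ⊆ A') (hB : B ⊆ B') :
    ∃ φ : G.Path → G.Path, (∀ P ∈ Ps, G.IsABPath A' B' (φ P) ∧
      ∀ e ∈ (φ P).edges, e ∈ P.edges) ∧ G.Sys A' B' S (φ '' Ps) := by
  have : ∀ P : G.Path, ∃ Q : G.Path, P ∈ Ps → G.IsABPath A' B' Q ∧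
      ∀ e ∈ Q.edges, e ∈ P.edges := by
    intro P
    by_cases hP : P ∈ Ps
    · have hh := h.2.1 P hP
      obtain ⟨Q, h1, h2⟩ := exists_sub_abPath P hd (hA hh.1) (hB hh.2.1)
      exact ⟨Q, fun _ => ⟨h1, edges_sub_of_darts h2⟩⟩
    · exact ⟨P, fun hh => absurd hh hP⟩
  choose φ hφ using this
  refine ⟨φ, hφ, ?_, ?_, ?_⟩
  · rintro _ ⟨P, hP, rfl⟩ _ ⟨Q, hQ, rfl⟩ hne e he he'
    have := h.eq_of_mem hP hQ ((hφ P hP).2 e he) ((hφ Q hQ).2 e he')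
    exact hne (by rw [this])
  · rintro _ ⟨P, hP, rfl⟩
    exact (hφ P hP).1
  · rintro _ ⟨P, hP, rfl⟩ e he
    exact h.2.2 P hP e ((hφ P hP).2 e he)

theorem IsWalk.reach_src {vs : List V} {es : List E} (h : G.IsWalk vs es) (X : Set V) :
    (∀ d ∈ dartsL vs es, d.2.1 ∈ X) → ∀ a, vs.head? = some a → ∀ d ∈ dartsL vs es,
    Relation.ReflTransGen (fun p q => ∃ e, (e, p, q) ∈ dartsL vs es ∧ q ∈ X) a d.2.1 := by
  induction h with
  | nil v => simp [dartsL]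
  | @cons u w vs e es h1 h2 ih =>
    intro hX a ha d hd
    simp at ha
    subst ha
    simp only [dartsL, List.mem_cons] at hd hX
    rcases hd with rfl | hd
    · exact Relation.ReflTransGen.refl
    · have hw : w ∈ X := by
        cases h2 with
        | nil => simp [dartsL] at hd
        | @cons _ w' vs' e' es' h3 h4 =>
          exact hX (e', w, w') (Or.inr (by simp [dartsL]))
      refine Relation.ReflTransGen.head (b := w) ⟨e, by simp [dartsL], hw⟩
        (Relation.ReflTransGen.mono ?_ _ _ (ih (fun d hd => hX d (Or.inr hd)) w (by simp) d hd))
      rintro p q ⟨e', h3, h4⟩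
      exact ⟨e', by simp only [dartsL, List.mem_cons]; exact Or.inr h3, h4⟩

theorem IsWalk.reach_last {vs : List V} {es : List E} (h : G.IsWalk vs es) :
    ∀ a, vs.head? = some a → ∀ b, vs.getLast? = some b →
    Relation.ReflTransGen (fun p q => ∃ e, (e, p, q) ∈ dartsL vs es) a b := by
  induction h with
  | nil v =>
    intro a h1 b h2; simp at h1 h2; subst h1; subst h2; exact Relation.ReflTransGen.refl
  | @cons u w vs e es h1 h2 ih =>
    intro a ha b hb
    simp at ha
    subst ha
    rw [List.getLast?_cons_cons] at hb
    refine Relation.ReflTransGen.head (b := w) ⟨e, by simp [dartsL]⟩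
        (Relation.ReflTransGen.mono ?_ _ _ (ih w (by simp) b hb))
    rintro p q ⟨e', h3⟩
    exact ⟨e', by simp only [dartsL, List.mem_cons]; exact Or.inr h3⟩

theorem Path.reach_src (P : G.Path) (X : Set V) (hX : ∀ d ∈ P.darts, d.2.1 ∈ X)
    {d : E × V × V} (hd : d ∈ P.darts) :
    Relation.ReflTransGen (fun p q => ∃ e, (e, p, q) ∈ P.darts ∧ q ∈ X) P.first d.2.1 :=
  P.isWalk.reach_src X hX _ P.head_eq d hd

theorem Path.reach_last (P : G.Path) :
    Relation.ReflTransGen (fun p q => ∃ e, (e, p, q) ∈ P.darts) P.first P.last :=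
  P.isWalk.reach_last _ P.head_eq _ P.getLast_eq

/-- Gluing an inside linkage and an outside linkage of `δ(X)`. -/
theorem glue {t : V} {B X : Set V} (ht : t ∈ X) (hB : Disjoint X B) {Pi Po : Set G.Path}
    (hi : G.Sys {t} Xᶜ Set.univ Pi) (hic : G.Cov (G.edgeCut X) Pi)
    (ho : G.Sys X B Set.univ Po) (hoc : G.Cov (G.edgeCut X) Po) :
    G.IsEMABCut {t} B (G.edgeCut X) := by
  have htX : ({t} : Set V) ⊆ X := Set.singleton_subset_iff.2 ht
  have hd1 : Disjoint ({t} : Set V) Xᶜ := Set.disjoint_left.2 fun a h1 h2 => h2 (htX h1)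
  have hd2 : Disjoint ({t} : Set V) B := hB.mono_left htX
  have : Nonempty G.Path := ⟨⟨t, t, [t], [], IsWalk.nil t, by simp, by simp, by simp⟩⟩
  choose! p hpm hpe using hic
  choose! q hqm hqe using hoc
  have hui : ∀ e ∈ G.edgeCut X, ∀ k ∈ G.edgeCut X, k ∈ (p e).edges → k = e := fun e he k hk h =>
    abPath_unique_last (p e) hd1 (hi.2.1 _ (hpm e he)) h hk (hpe e he) he
  have huo : ∀ e ∈ G.edgeCut X, ∀ k ∈ G.edgeCut X, k ∈ (q e).edges → k = e := fun e he k hk h =>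
    abPath_unique_first (q e) hB (ho.2.1 _ (hqm e he)) h hk (hqe e he) he
  have hN : ∀ e ∈ G.edgeCut X, ∃ N : G.Path, G.IsABPath {t} B N ∧
      ∀ k ∈ N.edges, k ∈ (p e).edges ∨ k ∈ (q e).edges := by
    intro e he
    have hpAB := hi.2.1 _ (hpm e he)
    have hqAB := ho.2.1 _ (hqm e he)
    have hp3 := ((abPath_iff _ hd1).1 hpAB).2.2
    have hq3 := ((abPath_iff _ hB).1 hqAB).2.2
    obtain ⟨d, hd, hde, hdX⟩ := (p e).mem_cut (hpe e he) he
    obtain ⟨d', hd', hde', hdX'⟩ := (q e).mem_cut (hqe e he) he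
    have c1 : d.2.1 ∈ X := by
      by_contra hc; exact (hp3 d hd).1 hc
    have c2 := (hq3 d' hd').2
    have c3 : d.2.2 ∉ X := by tauto
    have c4 : d'.2.1 ∈ X := by tauto
    have c5 : d'.2.1 = d.2.1 := by
      have v1 := (p e).valid hd
      have v2 := (q e).valid hd'
      rw [hde] at v1
      rw [hde', v1, Sym2.eq_iff] at v2
      rcases v2 with v2 | v2
      · exact v2.1.symm
      · exact absurd (v2.1 ▸ c1) c2
    have c6 := abPath_src _ hB hqAB hd' c4
    have r1 := (p e).reach_src Set.univ (fun _ _ => trivial) hd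
    have r2 := (q e).reach_last
    rw [← c6, c5] at r2
    have r3 : Relation.ReflTransGen (fun u w => ∃ k, (k, u, w) ∈ (p e).darts ∨
        (k, u, w) ∈ (q e).darts) (p e).first (q e).last := by
      refine (Relation.ReflTransGen.mono ?_ _ _ r1).trans (Relation.ReflTransGen.mono ?_ _ _ r2)
      · rintro u w ⟨k, hk, _⟩; exact ⟨k, Or.inl hk⟩
      · rintro u w ⟨k, hk⟩; exact ⟨k, Or.inr hk⟩
    obtain ⟨M, m1, m2, m3⟩ := exists_path_of_reach (G := G) (fun k u w => (k, u, w) ∈ (p e).darts ∨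
        (k, u, w) ∈ (q e).darts) (by
          rintro k u w (h | h)
          · exact (p e).valid h
          · exact (q e).valid h) r3
    obtain ⟨N, n1, n2⟩ := exists_sub_abPath M hd2 (m1 ▸ hpAB.1) (m2 ▸ hqAB.2.1)
    refine ⟨N, n1, fun k hk => ?_⟩
    obtain ⟨x, hx, rfl⟩ := M.mem_edges.1 (edges_sub_of_darts n2 k hk)
    rcases m3 x hx with h | h
    · exact Or.inl ((p e).mem_edges.2 ⟨_, h, rfl⟩)
    · exact Or.inr ((q e).mem_edges.2 ⟨_, h, rfl⟩)
  choose! N hN1 hN2 using hN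
  have hio : ∀ e ∈ G.edgeCut X, ∀ e' ∈ G.edgeCut X, ∀ k, k ∈ (p e).edges → k ∈ (q e').edges →
      e = e' := by
    intro e he e' he' k hk hk'
    have hkX : k ∈ G.edgeCut X := by
      obtain ⟨d, hd, rfl⟩ := (p e).mem_edges.1 hk
      obtain ⟨d', hd', hdd⟩ := (q e').mem_edges.1 hk'
      have hp3 := (((abPath_iff _ hd1).1 (hi.2.1 _ (hpm e he))).2.2 d hd).1
      have hq3 := (((abPath_iff _ hB).1 (ho.2.1 _ (hqm e' he'))).2.2 d' hd').2
      have hp3' : d.2.1 ∈ X := by by_contra hc; exact hp3 hc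
      have v1 := (p e).valid hd
      have v2 := (q e').valid hd'
      rw [hdd, v1, Sym2.eq_iff] at v2
      rcases v2 with v2 | v2
      · exact ⟨_, _, v1, hp3', v2.2 ▸ hq3⟩
      · exact absurd (v2.1 ▸ hp3') hq3
    rw [← hui e he k hkX hk, ← huo e' he' k hkX hk']
  have hsys : G.Sys {t} B Set.univ (N '' G.edgeCut X) := by
    refine ⟨?_, ?_, fun _ _ _ _ => trivial⟩
    · rintro _ ⟨e, he, rfl⟩ _ ⟨e', he', rfl⟩ hne k hk hk'
      apply hne
      suffices e = e' by rw [this]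
      rcases hN2 e he k hk with h | h <;> rcases hN2 e' he' k hk' with h' | h'
      · have := hi.eq_of_mem (hpm e he) (hpm e' he') h h'
        exact hui e' he' e he (this ▸ hpe e he)
      · exact hio e he e' he' k h h'
      · exact (hio e' he' e he k h' h).symm
      · have := ho.eq_of_mem (hqm e he) (hqm e' he') h h'
        exact huo e' he' e he (this ▸ hqe e he)
    · rintro _ ⟨e, he, rfl⟩; exact hN1 e he
  have hNu : ∀ e ∈ G.edgeCut X, ∀ k ∈ G.edgeCut X, k ∈ (N e).edges → k = e := by
    intro e he k hk hkN
    rcases hN2 e he k hkN with h | h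
    · exact hui e he k hk h
    · exact huo e he k hk h
  have hNe : ∀ e ∈ G.edgeCut X, e ∈ (N e).edges := by
    intro e he
    obtain ⟨k, hk, hk'⟩ := (N e).cross_edge (X := X) (htX (hN1 e he).1)
      (fun h => Set.disjoint_left.1 hB h (hN1 e he).2.1)
    have := hNu e he k hk' hk
    exact this ▸ hk
  refine em_of htX hB hsys ⟨?_, ?_⟩
  · rintro _ ⟨e, he, rfl⟩
    exact ⟨e, ⟨he, hNe e he⟩, fun k hk => hNu e he k hk.1 hk.2⟩
  · intro e he
    exact ⟨N e, ⟨e, he, rfl⟩, hNe e he⟩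

end Main


section Inside

variable {V : Type u} {E : Type v} {G : Grapht V E}

theorem even_union {A B : Set V} {S : Set E} {Ps : Set G.Path} (h : G.Sys A B S Ps)
    (R : Set V) (hR : ∀ P ∈ Ps, P.first ∉ R ∧ P.last ∉ R) (F : Finset G.Path) :
    (∀ P ∈ F, P ∈ Ps) →
    (⋃ P ∈ F, ({e | e ∈ P.edges} ∩ G.edgeCut R)).Finite ∧
    Even (⋃ P ∈ F, ({e | e ∈ P.edges} ∩ G.edgeCut R)).ncard := by
  induction F using Finset.induction_on with
  | empty => intro _; simp
  | insert P F hPF ih =>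
    intro hF
    obtain ⟨i1, i2⟩ := ih (fun Q hQ => hF Q (Finset.mem_insert_of_mem hQ))
    have hP := hF P (Finset.mem_insert_self _ _)
    obtain ⟨j1, j2⟩ := P.parity (hR P hP).1 (hR P hP).2
    rw [Finset.set_biUnion_insert]
    refine ⟨j1.union i1, ?_⟩
    rw [Set.ncard_union_eq ?_ j1 i1]
    · exact j2.add i2
    · rw [Set.disjoint_left]
      rintro e ⟨he, _⟩ h2
      simp only [Set.mem_iUnion] at h2
      obtain ⟨Q, hQ, he', _⟩ := h2
      have := h.eq_of_mem hP (hF Q (Finset.mem_insert_of_mem hQ)) he he'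
      exact hPF (this ▸ hQ)

/-- A system of `t(Xᶜ)`-paths covering all of `δ(X)` except `k`. -/
def Hole (G : Grapht V E) (t : V) (X : Set V) (Ps : Set G.Path) (k : E) : Prop :=
  G.Sys {t} Xᶜ Set.univ Ps ∧ k ∈ G.edgeCut X ∧ (∀ P ∈ Ps, k ∉ P.edges) ∧
    G.Cov (G.edgeCut X \ {k}) Ps

theorem hole_step (hG : G.InnerEulerian) {t : V} {X : Set V} (ht : t ∈ X)
    (hX : Disjoint X (G.T \ {t}))
    (hno : ¬ ∃ Qs, G.Sys {t} Xᶜ Set.univ Qs ∧ G.Cov (G.edgeCut X) Qs)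
    {Ps : Set G.Path} {k : E} (h : G.Hole t X Ps k) {C : Set G.Path} (hCf : C.Finite)
    (hC : C ⊆ Ps) :
    ∃ Ps' k', G.Hole t X Ps' k' ∧ C ⊆ Ps' ∧ ∃ N ∈ Ps', k ∈ N.edges := by
  obtain ⟨hs, hk, hku, hcov⟩ := h
  have htX : ({t} : Set V) ⊆ X := Set.singleton_subset_iff.2 ht
  have hd1 : Disjoint ({t} : Set V) Xᶜ := Set.disjoint_left.2 fun a h1 h2 => h2 (htX h1)
  obtain ⟨x0, y0, hxy, hx0, hy0⟩ := id hk
  let D : E → V → V → Prop := fun e u w =>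
    G.I e = s(u, w) ∧ u ∈ X ∧ w ∈ X ∧ ∀ P ∈ Ps, e ∉ P.edges
  let R : Set V := {x | Relation.ReflTransGen (fun u w => ∃ e, D e u w) x x0}
  have hRX : R ⊆ X := by
    intro x hx
    rcases Relation.ReflTransGen.cases_head hx with rfl | ⟨c, ⟨e, he⟩, _⟩
    · exact hx0
    · exact he.2.1
  have hx0R : x0 ∈ R := Relation.ReflTransGen.refl
  have huse : ∀ e ∈ G.edgeCut X, (∀ P ∈ Ps, e ∉ P.edges) → e = k := by
    intro e he hu
    by_contra hne
    obtain ⟨P, hP, hh⟩ := hcov e ⟨he, hne⟩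
    exact hu P hP hh
  have hsrcX : ∀ P ∈ Ps, ∀ d ∈ P.darts, d.2.1 ∈ X := by
    intro P hP d hd
    by_contra hc
    exact (((abPath_iff P hd1).1 (hs.2.1 P hP)).2.2 d hd).1 hc
  -- general filling principle
  have fill : ∀ (K : Set E) (v : V), v ∈ R →
      Relation.ReflTransGen (fun u w => ∃ e, G.I e = s(u, w) ∧ u ∈ X ∧ w ∈ X ∧ e ∈ K) t v →
      ∃ N : G.Path, G.IsABPath {t} Xᶜ N ∧ k ∈ N.edges ∧ ∀ e ∈ N.edges,
        (e ∈ K ∧ e ∉ G.edgeCut X) ∨ ∀ P ∈ Ps, e ∉ P.edges := by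
    intro K v hv hr
    let D3 : E → V → V → Prop := fun e u w => G.I e = s(u, w) ∧
      ((e ∈ K ∧ e ∉ G.edgeCut X) ∨ ∀ P ∈ Ps, e ∉ P.edges)
    have r : Relation.ReflTransGen (fun u w => ∃ e, D3 e u w) t y0 := by
      refine ((Relation.ReflTransGen.mono ?_ _ _ hr).trans
        (Relation.ReflTransGen.mono ?_ _ _ hv)).tail ⟨k, hxy, Or.inr hku⟩
      · rintro u w ⟨e, h1, h2, h3, h4⟩
        refine ⟨e, h1, Or.inl ⟨h4, ?_⟩⟩
        rintro ⟨p, q, hpq, hp, hq⟩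
        rw [h1, Sym2.eq_iff] at hpq
        rcases hpq with ⟨rfl, rfl⟩ | ⟨rfl, rfl⟩
        · exact hq h3
        · exact hq h2
      · rintro u w ⟨e, h1, h2, h3, h4⟩
        exact ⟨e, h1, Or.inr h4⟩
    obtain ⟨M, m1, m2, m3⟩ := exists_path_of_reach (G := G) D3 (fun e u w h => h.1) r
    obtain ⟨N, n1, n2⟩ := exists_sub_abPath M hd1 (by rw [m1]; rfl) (by rw [m2]; exact hy0)
    have n3 : ∀ e ∈ N.edges, (e ∈ K ∧ e ∉ G.edgeCut X) ∨ ∀ P ∈ Ps, e ∉ P.edges := by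
      intro e he
      obtain ⟨x, hx, rfl⟩ := M.mem_edges.1 (edges_sub_of_darts n2 e he)
      exact (m3 x hx).2
    refine ⟨N, n1, ?_, n3⟩
    obtain ⟨e, he, he'⟩ := N.cross_edge (htX n1.1) n1.2.1
    rcases n3 e he with h | h
    · exact absurd he' h.2
    · exact huse e he' h ▸ he
  by_cases htR : t ∈ R
  · exfalso
    obtain ⟨N, n1, n2, n3⟩ := fill ∅ t htR Relation.ReflTransGen.refl
    have n4 : ∀ P ∈ Ps, ∀ e, e ∈ N.edges → e ∉ P.edges := by
      intro P hP e he
      rcases n3 e he with h | h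
      · exact absurd h.1 (by simp)
      · exact h P hP
    refine hno ⟨insert N Ps, ⟨?_, ?_, fun _ _ _ _ => trivial⟩, ?_⟩
    · intro Q hQ Q' hQ' hne e he he'
      rcases hQ with rfl | hQ <;> rcases hQ' with rfl | hQ'
      · exact hne rfl
      · exact n4 Q' hQ' e he he'
      · exact n4 Q hQ e he' he
      · exact hs.1 hQ hQ' hne e he he'
    · rintro Q (rfl | hQ)
      · exact n1
      · exact hs.2.1 Q hQ
    · intro e he
      by_cases hek : e = k
      · exact ⟨N, Or.inl rfl, hek ▸ n2⟩
      · obtain ⟨P, hP, hh⟩ := hcov e ⟨he, hek⟩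
        exact ⟨P, Or.inr hP, hh⟩
  by_cases hmeet : ∃ P0 ∈ Ps, P0 ∉ C ∧ ∃ d ∈ P0.darts, d.2.1 ∈ R ∨ d.2.2 ∈ R
  · obtain ⟨P0, hP0, hP0C, d, hd, hdR⟩ := hmeet
    have hP0AB := hs.2.1 P0 hP0
    have hr : ∃ v ∈ R, Relation.ReflTransGen
        (fun u w => ∃ e, G.I e = s(u, w) ∧ u ∈ X ∧ w ∈ X ∧ e ∈ {e | e ∈ P0.edges}) t v := by
      have r1 := P0.reach_src X (hsrcX P0 hP0) hd
      have hf : P0.first = t := hP0AB.1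
      rw [hf] at r1
      have conv : ∀ u w, (∃ e, (e, u, w) ∈ P0.darts ∧ w ∈ X) →
          ∃ e, G.I e = s(u, w) ∧ u ∈ X ∧ w ∈ X ∧ e ∈ {e | e ∈ P0.edges} := by
        rintro u w ⟨e, h1, h2⟩
        exact ⟨e, P0.valid h1, hsrcX P0 hP0 _ h1, h2, P0.mem_edges.2 ⟨_, h1, rfl⟩⟩
      rcases hdR with hdR | hdR
      · exact ⟨_, hdR, Relation.ReflTransGen.mono conv _ _ r1⟩
      · exact ⟨_, hdR, Relation.ReflTransGen.mono conv _ _ (r1.tail ⟨d.1, hd, hRX hdR⟩)⟩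
    obtain ⟨v, hv, hr⟩ := hr
    obtain ⟨N, n1, n2, n3⟩ := fill _ v hv hr
    obtain ⟨e1, he1, he1'⟩ := P0.cross_edge (htX hP0AB.1) hP0AB.2.1
    have n4 : ∀ P ∈ Ps \ {P0}, ∀ e, e ∈ N.edges → e ∉ P.edges := by
      rintro P ⟨hP, hne⟩ e he he'
      rcases n3 e he with h | h
      · exact hne (hs.eq_of_mem hP hP0 he' h.1)
      · exact h P hP he'
    refine ⟨insert N (Ps \ {P0}), e1, ⟨⟨?_, ?_, fun _ _ _ _ => trivial⟩, he1', ?_, ?_⟩, ?_,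
      N, Or.inl rfl, n2⟩
    · intro Q hQ Q' hQ' hne e he he'
      rcases hQ with rfl | hQ <;> rcases hQ' with rfl | hQ'
      · exact hne rfl
      · exact n4 Q' hQ' e he he'
      · exact n4 Q hQ e he' he
      · exact hs.1 hQ.1 hQ'.1 hne e he he'
    · rintro Q (rfl | hQ)
      · exact n1
      · exact hs.2.1 Q hQ.1
    · rintro Q (rfl | hQ) he
      · rcases n3 e1 he with h | h
        · exact h.2 he1'
        · exact h P0 hP0 he1
      · exact hQ.2 (hs.eq_of_mem hQ.1 hP0 he he1)
    · rintro e ⟨he, hne⟩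
      by_cases hek : e = k
      · exact ⟨N, Or.inl rfl, hek ▸ n2⟩
      · obtain ⟨P, hP, hh⟩ := hcov e ⟨he, hek⟩
        refine ⟨P, Or.inr ⟨hP, ?_⟩, hh⟩
        intro hPP
        rw [Set.mem_singleton_iff] at hPP
        subst hPP
        exact hne (abPath_unique_last P hd1 hP0AB hh he he1 he1')
    · intro P hP
      exact Or.inr ⟨hC hP, fun hPP => hP0C (Set.mem_singleton_iff.1 hPP ▸ hP)⟩
  · exfalso
    push Not at hmeet
    obtain ⟨u1, u2⟩ := even_union hs R (fun P hP => ⟨by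
        rw [show P.first = t from (hs.2.1 P hP).1]; exact htR,
      fun hc => (hs.2.1 P hP).2.1 (hRX hc)⟩) hCf.toFinset (fun P hP => hC (by simpa using hP))
    have hcut : G.edgeCut R =
        insert k (⋃ P ∈ hCf.toFinset, ({e | e ∈ P.edges} ∩ G.edgeCut R)) := by
      apply Set.Subset.antisymm
      · intro e he
        by_cases hused : ∃ P ∈ Ps, e ∈ P.edges
        · obtain ⟨P, hP, heP⟩ := hused
          right
          simp only [Set.mem_iUnion]
          refine ⟨P, ?_, heP, he⟩
          rw [Set.Finite.mem_toFinset]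
          by_contra hPC
          obtain ⟨d, hd, rfl, hdR⟩ := P.mem_cut heP he
          have := hmeet P hP hPC d hd
          tauto
        · push Not at hused
          left
          obtain ⟨u, w, h1, hu, hw⟩ := id he
          apply huse e _ hused
          refine ⟨u, w, h1, hRX hu, fun hwX => hw ?_⟩
          refine Relation.ReflTransGen.head (b := u) ⟨e, ?_, hwX, hRX hu, hused⟩ hu
          rw [h1, Sym2.eq_swap]
      · rintro e (rfl | he)
        · exact ⟨x0, y0, hxy, hx0R, fun h => hy0 (hRX h)⟩
        · simp only [Set.mem_iUnion] at he
          obtain ⟨P, _, h⟩ := he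
          exact h.2
    have hknot : k ∉ ⋃ P ∈ hCf.toFinset, ({e | e ∈ P.edges} ∩ G.edgeCut R) := by
      intro hk'
      simp only [Set.mem_iUnion] at hk'
      obtain ⟨P, hP, h1, _⟩ := hk'
      exact hku P (hC (by simpa using hP)) h1
    refine hG R ?_ ⟨?_, ?_⟩
    · rw [Set.disjoint_left]
      intro x hx hxT
      refine Set.disjoint_left.1 hX (hRX hx) ⟨hxT, ?_⟩
      intro hxt
      exact htR (Set.mem_singleton_iff.1 hxt ▸ hx)
    · rw [hcut]; exact u1.insert k
    · rw [hcut, Set.ncard_insert_of_notMem hknot u1]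
      exact u2.add_one

theorem inside [Countable E] (hG : G.InnerEulerian) {t : V} {X : Set V} (ht : t ∈ X)
    (hX : Disjoint X (G.T \ {t})) {Ps : Set G.Path} {k : E} (h : G.Hole t X Ps k) :
    ∃ Qs, G.Sys {t} Xᶜ Set.univ Qs ∧ G.Cov (G.edgeCut X) Qs := by
  by_contra hno
  let Good : Set G.Path → Prop := fun C => C.Finite ∧ ∃ Ps k, G.Hole t X Ps k ∧ C ⊆ Ps
  have step : ∀ C : {C // Good C}, ∀ e : E, ∃ C' : {C // Good C}, C.1 ⊆ C'.1 ∧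
      (e ∈ G.edgeCut X → ∃ P ∈ C'.1, e ∈ P.edges) := by
    rintro ⟨C, hCf, Ps, k, hh, hC⟩ e
    by_cases he : e ∈ G.edgeCut X
    · have key : ∃ Ps' k', G.Hole t X Ps' k' ∧ C ⊆ Ps' ∧ ∃ N ∈ Ps', e ∈ N.edges := by
        by_cases hek : e = k
        · subst hek
          exact hole_step hG ht hX hno hh hCf hC
        · exact ⟨Ps, k, hh, hC, hh.2.2.2 e ⟨he, hek⟩⟩
      obtain ⟨Ps', k', h', hC', N, hN, heN⟩ := key
      refine ⟨⟨insert N C, hCf.insert N, Ps', k', h', Set.insert_subset hN hC'⟩,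
        Set.subset_insert _ _, fun _ => ⟨N, Set.mem_insert _ _, heN⟩⟩
    · exact ⟨⟨C, hCf, Ps, k, hh, hC⟩, le_rfl, fun h => absurd h he⟩
  choose next hn1 hn2 using step
  have : Nonempty E := ⟨k⟩
  obtain ⟨enum, henum⟩ := exists_surjective_nat E
  let s : ℕ → {C // Good C} := fun n =>
    Nat.rec ⟨∅, Set.finite_empty, Ps, k, h, Set.empty_subset _⟩ (fun n C => next C (enum n)) n
  have hs : ∀ n, s (n + 1) = next (s n) (enum n) := fun n => rfl
  have hmono : Monotone (fun n => (s n).1) :=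
    monotone_nat_of_le_succ fun n => by
      change (s n).1 ⊆ (s (n + 1)).1
      rw [hs]; exact hn1 _ _
  refine hno ⟨⋃ n, (s n).1, ⟨?_, ?_, fun _ _ _ _ => trivial⟩, ?_⟩
  · intro P hP Q hQ hne
    rw [Set.mem_iUnion] at hP hQ
    obtain ⟨m, hm⟩ := hP
    obtain ⟨n, hn⟩ := hQ
    obtain ⟨_, Ps', k', h', hC'⟩ := (s (max m n)).2
    exact h'.1.1 (hC' (hmono (le_max_left m n) hm)) (hC' (hmono (le_max_right m n) hn)) hne
  · intro P hP
    rw [Set.mem_iUnion] at hP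
    obtain ⟨n, hn⟩ := hP
    obtain ⟨_, Ps', k', h', hC'⟩ := (s n).2
    exact h'.1.2.1 P (hC' hn)
  · intro e he
    obtain ⟨n, rfl⟩ := henum e
    obtain ⟨P, hP, hh⟩ := hn2 (s n) (enum n) he
    exact ⟨P, Set.mem_iUnion.2 ⟨n + 1, by rw [hs]; exact hP⟩, hh⟩

theorem IsWalk.to_restrict (F : Set E) {vs : List V} {es : List E} (h : G.IsWalk vs es) :
    (∀ e ∈ es, e ∈ F) → ∃ es' : List F, es'.map Subtype.val = es ∧ (G.restrict F).IsWalk vs es' := by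
  induction h with
  | nil v => intro _; exact ⟨[], rfl, IsWalk.nil v⟩
  | @cons u w vs e es h1 h2 ih =>
    intro hF
    obtain ⟨es', h3, h4⟩ := ih (fun e he => hF e (List.mem_cons_of_mem _ he))
    exact ⟨⟨e, hF e (by simp)⟩ :: es', by simp [h3], IsWalk.cons h1 h4⟩

theorem linked_of_sys (F : Set E) {t : V} (ht : t ∈ G.T) {Ps : Set G.Path}
    (h : G.Sys {t} (G.T \ {t}) F Ps) (hc : G.Cov (G.edgeCut {t} ∩ F) Ps) :
    (G.restrict F).Linked t := by
  have : ∀ P : G.Path, P ∈ Ps → ∃ Q : (G.restrict F).Path, Q.first = P.first ∧ Q.last = P.last ∧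
      Q.verts = P.verts ∧ Q.edges.map Subtype.val = P.edges := by
    intro P hP
    obtain ⟨es', h1, h2⟩ := P.isWalk.to_restrict F (h.2.2 P hP)
    exact ⟨⟨P.first, P.last, P.verts, es', h2, P.nodup, P.head_eq, P.getLast_eq⟩, rfl, rfl, rfl, h1⟩
  have ne : Nonempty (G.restrict F).Path :=
    ⟨⟨t, t, [t], [], IsWalk.nil t, by simp, by simp, by simp⟩⟩
  choose! φ h1 h2 h3 h4 using this
  have hmem : ∀ P ∈ Ps, ∀ e : F, e ∈ (φ P).edges ↔ e.1 ∈ P.edges := by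
    intro P hP e
    rw [← h4 P hP]
    simp
  refine ⟨φ '' Ps, ⟨?_, ?_⟩, ?_⟩
  · rintro _ ⟨P, hP, rfl⟩ _ ⟨Q, hQ, rfl⟩ hne e he he'
    rw [hmem P hP] at he
    rw [hmem Q hQ] at he'
    exact hne (by rw [h.eq_of_mem hP hQ he he'])
  · rintro _ ⟨P, hP, rfl⟩
    obtain ⟨a, b, c⟩ := h.2.1 P hP
    have a' : P.first = t := a
    refine ⟨?_, ?_, ?_, ?_⟩
    · rw [h1 P hP, a']; exact ht
    · rw [h2 P hP]; exact b.1
    · rw [h1 P hP, h2 P hP, a']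
      intro hh
      exact b.2 hh.symm
    · intro v hv hvT
      rw [Path.inner, h3 P hP] at hv
      refine c v hv ?_
      by_cases hvt : v = t
      · exact Or.inl hvt
      · exact Or.inr ⟨hvT, hvt⟩
  · rintro e ⟨u, w, he, hu, hw⟩
    obtain ⟨P, hP, heP⟩ := hc e.1 ⟨⟨u, w, he, hu, hw⟩, e.2⟩
    exact ⟨φ P, ⟨P, hP, rfl⟩, (hmem P hP e).2 heP⟩

theorem main_sys [Countable E] (hG : G.InnerEulerian) (f g : E) (t : V) 
    (hEM : G.IsEMABCut {t} (G.T \ {t}) (G.edgeCut {t}))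
    (huniq : ∀ C : Set E, G.IsEMABCut {t} (G.T \ {t}) C → C = G.edgeCut {t}) :
    ∃ Ps, G.Sys {t} (G.T \ {t}) ((Set.univ \ {f}) \ {g}) Ps ∧
      G.Cov (G.edgeCut {t} ∩ ((Set.univ \ {f}) \ {g})) Ps := by
  have hAB : Disjoint ({t} : Set V) (G.T \ {t}) :=
    Set.disjoint_left.2 fun a h1 h2 => h2.2 h1
  obtain ⟨_, P0, p1, p2, p3⟩ := hEM
  have hs0 : G.Sys {t} (G.T \ {t}) Set.univ P0 := ⟨p1, p2, fun _ _ _ _ => trivial⟩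
  have step1 : ∃ Ps, G.Sys {t} (G.T \ {t}) (Set.univ \ {f}) Ps ∧
      G.Cov (G.edgeCut {t} ∩ (Set.univ \ {f})) Ps := by
    by_cases hf : f ∈ G.edgeCut {t}
    · exact drop_edge hAB hs0 (fun e he => p3.2 e he.1) f hf
    · rcases delete_one hAB hs0 (fun e he => p3.2 e he.1) f with h | ⟨X, x1, x2, x3, x4⟩
      · exact h
      · rw [Set.inter_univ] at x4
        exact absurd (huniq _ (em_of x1 x2 hs0 x4) ▸ x3) hf
  obtain ⟨P1, hs1, hc1⟩ := step1
  by_cases hg : g ∈ G.edgeCut {t}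
  · exact drop_edge hAB hs1 hc1 g hg
  by_cases hgf : g = f
  · subst hgf
    exact ⟨P1, hs1.mono le_rfl (fun P hP e he => ⟨hs1.2.2 P hP e he, (hs1.2.2 P hP e he).2⟩),
      fun e he => hc1 e ⟨he.1, he.2.1⟩⟩
  rcases delete_one hAB hs1 hc1 g with h | ⟨X, x1, x2, x3, x4⟩
  · exact h
  exfalso
  by_cases hfX : f ∈ G.edgeCut X
  swap
  · have : G.edgeCut X ∩ (Set.univ \ {f}) = G.edgeCut X := by
      ext e
      simp only [Set.mem_inter_iff, Set.mem_sdiff, Set.mem_univ, true_and, Set.mem_singleton_iff,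
        and_iff_left_iff_imp]
      rintro he rfl
      exact hfX he
    rw [this] at x4
    exact hg (huniq _ (em_of x1 x2 hs1 x4) ▸ x3)
  have htX : t ∈ X := x1 rfl
  have hd1 : Disjoint ({t} : Set V) Xᶜ := Set.disjoint_left.2 fun a h1 h2 => h2 (x1 h1)
  have hBX : G.T \ {t} ⊆ Xᶜ := fun b hb hbX => Set.disjoint_left.1 x2 hbX hb
  have hfP : ∀ P ∈ P1, f ∉ P.edges := fun P hP hf => (hs1.2.2 P hP f hf).2 rfl
  have huq : ∀ P ∈ P1, ∀ e ∈ P.edges, ∀ e' ∈ P.edges, e ∈ G.edgeCut X → e' ∈ G.edgeCut X →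
      e = e' := by
    intro P hP e he e' he' h1 h2
    obtain ⟨e0, _, h0⟩ := x4.1 P hP
    rw [h0 e ⟨⟨h1, hs1.2.2 P hP e he⟩, he⟩, h0 e' ⟨⟨h2, hs1.2.2 P hP e' he'⟩, he'⟩]
  have hcX : ∀ e ∈ G.edgeCut X, e ≠ f → ∃ P ∈ P1, e ∈ P.edges :=
    fun e he hne => x4.2 e ⟨he, trivial, hne⟩
  -- inside
  have hin : ∃ Qs, G.Sys {t} Xᶜ Set.univ Qs ∧ G.Cov (G.edgeCut X) Qs := by
    obtain ⟨φ, f1, f2⟩ := hs1.sub hd1 le_rfl hBX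
    refine inside hG htX x2 (Ps := φ '' P1) (k := f)
      ⟨f2.mono le_rfl (fun _ _ _ _ => trivial), hfX, ?_, ?_⟩
    · rintro _ ⟨P, hP, rfl⟩ hf
      exact hfP P hP ((f1 P hP).2 f hf)
    · rintro e ⟨he, hne⟩
      obtain ⟨P, hP, heP⟩ := hcX e he hne
      refine ⟨φ P, ⟨P, hP, rfl⟩, ?_⟩
      obtain ⟨e', h1, h2⟩ := (φ P).cross_edge (x1 (f1 P hP).1.1) (f1 P hP).1.2.1
      rw [huq P hP e heP e' ((f1 P hP).2 e' h1) he h2]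
      exact h1
  -- outside
  have hout : ∃ Qs, G.Sys X (G.T \ {t}) Set.univ Qs ∧ G.Cov (G.edgeCut X) Qs := by
    obtain ⟨φ, f1, f2⟩ := hs1.sub x2 x1 le_rfl
    have f3 : G.Sys X (G.T \ {t}) Set.univ (φ '' P1) := f2.mono le_rfl (fun _ _ _ _ => trivial)
    rcases augment x2 f3 f (by
      intro e he _ hne
      obtain ⟨P, hP, heP⟩ := hcX e he hne
      refine ⟨φ P, ⟨P, hP, rfl⟩, ?_⟩
      obtain ⟨e', h1, h2⟩ := (φ P).cross_edge (f1 P hP).1.1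
        (fun hc => Set.disjoint_left.1 x2 hc (f1 P hP).1.2.1)
      rw [huq P hP e heP e' ((f1 P hP).2 e' h1) he h2]
      exact h1) with ⟨Qs, q1, q2⟩ | ⟨Y, y1, y2, y3, y4⟩
    · exact ⟨Qs, q1, fun e he => q2 e ⟨he, trivial⟩⟩
    · exfalso
      have hY : G.edgeCut Y = G.edgeCut {t} := by
        refine huniq _ (em_of (x1.trans y1) y2 hs1 ⟨?_, ?_⟩)
        · intro P hP
          obtain ⟨e, ⟨h1, h2⟩, h3⟩ := y4 (φ P) ⟨P, hP, rfl⟩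
          refine ⟨e, ⟨h1, (f1 P hP).2 e h2⟩, ?_⟩
          rintro e' ⟨h1', h2'⟩
          obtain ⟨_, ⟨Q, hQ, rfl⟩, hh⟩ := y3 e' ⟨h1', trivial⟩
          have := hs1.eq_of_mem hP hQ h2' ((f1 Q hQ).2 e' hh)
          subst this
          exact h3 e' ⟨h1', hh⟩
        · intro e he
          obtain ⟨_, ⟨Q, hQ, rfl⟩, hh⟩ := y3 e ⟨he, trivial⟩
          exact ⟨Q, hQ, (f1 Q hQ).2 e hh⟩
      obtain ⟨P, hP, hgP⟩ := hcX g x3 hgf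
      obtain ⟨e, ⟨h1, h2⟩, _⟩ := y4 (φ P) ⟨P, hP, rfl⟩
      have heX : e ∈ G.edgeCut X := by
        obtain ⟨u, w, h, hu, hw⟩ := id h1
        rw [hY] at h1
        obtain ⟨u', w', h', hu', hw'⟩ := h1
        rw [Set.mem_singleton_iff] at hu'
        subst hu'
        rw [h, Sym2.eq_iff] at h'
        rcases h' with ⟨rfl, rfl⟩ | ⟨rfl, rfl⟩
        · exact ⟨_, _, h, htX, fun hc => hw (y1 hc)⟩
        · exact absurd (y1 htX) hw
      have := huq P hP g hgP e ((f1 P hP).2 e h2) x3 heX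
      subst this
      exact hg (hY ▸ h1)
  obtain ⟨Pi, i1, i2⟩ := hin
  obtain ⟨Po, o1, o2⟩ := hout
  exact hg (huniq _ (glue htX x2 i1 i2 o1 o2) ▸ x3)

end Inside

end Grapht


/-- In a countable inner Eulerian grapht, after deleting any (at most) two edges every
terminal `t` for which `δ(t)` was the unique Erdős–Menger `t(T−t)`-cut remains
linked. -/
theorem safe_deletion_terminals {V : Type u} {E : Type v} [Countable E]
    (G : Grapht V E) (hG : G.InnerEulerian) :
    ∀ f g : E, ∀ t ∈ G.T,
      G.IsEMABCut {t} (G.T \ {t}) (G.edgeCut {t}) →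
      (∀ C : Set E, G.IsEMABCut {t} (G.T \ {t}) C → C = G.edgeCut {t}) →
      (G.restrict {f, g}ᶜ).Linked t := by
  intro f g t ht hEM huniq
  obtain ⟨Ps, h1, h2⟩ := Grapht.main_sys hG f g t hEM huniq
  have hset : (Set.univ \ {f}) \ {g} = ({f, g}ᶜ : Set E) := by ext e; simp [not_or]
  rw [hset] at h1 h2
  exact Grapht.linked_of_sys _ ht h1 h2
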